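/- arXiv:2605.08026 — 2 statements merged into one kernel-verified Lean document; each statement's English description precedes it below -/
import Mathlib

section
/- Let F : ℝ^n → ℝ^ℓ be locally Lipschitz continuous and directionally differentiable, and fix x, d ∈ ℝ^n and λ ∈ ℝ^ℓ. Then ∂⟨λ, F⟩(x; d) ⊂ Σ_{i=1}^ℓ |λ_i| ∂(sgn(λ_i) F_i)(x; d) (a Minkowski sum of scaled sets), and equality holds whenever all but at most one component function of F are continuously differentiable at x. -/
open Filter Topology Metric Set
open scoped RealInnerProductSpace Pointwise

noncomputable section

/-- Euclidean space `ℝ^n`. -/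
abbrev Eu (n : ℕ) := EuclideanSpace ℝ (Fin n)

section Cones

variable {H : Type*} [NormedAddCommGroup H] [InnerProductSpace ℝ H]

/-- Tangent (Bouligand) cone to `Ω` at `x` (empty if `x ∉ Ω`). -/
def tanCone (Ω : Set H) (x : H) : Set H :=
  {d | x ∈ Ω ∧ ∃ (dk : ℕ → H) (tk : ℕ → ℝ),
    Tendsto dk atTop (𝓝 d) ∧ (∀ k, 0 < tk k) ∧ Tendsto tk atTop (𝓝 0) ∧
    ∀ k, x + tk k • dk k ∈ Ω}

/-- Polar cone of a set. -/
def polarCone (C : Set H) : Set H := {y | ∀ x ∈ C, ⟪x, y⟫ ≤ 0}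

/-- Regular (Fréchet) normal cone: polar of the tangent cone (empty if `x ∉ Ω`). -/
def regNormal (Ω : Set H) (x : H) : Set H :=
  {η | x ∈ Ω ∧ η ∈ polarCone (tanCone Ω x)}

/-- Limiting (Mordukhovich) normal cone (empty if `x ∉ Ω`). -/
def limNormal (Ω : Set H) (x : H) : Set H :=
  {η | x ∈ Ω ∧ ∃ (xk ηk : ℕ → H),
    Tendsto xk atTop (𝓝 x) ∧ Tendsto ηk atTop (𝓝 η) ∧
    ∀ k, ηk k ∈ regNormal Ω (xk k)}

/-- Directional limiting normal cone to `Ω` at `x` in direction `d`. -/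
def dirLimNormal (Ω : Set H) (x d : H) : Set H :=
  {η | x ∈ Ω ∧ ∃ (dk : ℕ → H) (tk : ℕ → ℝ) (ηk : ℕ → H),
    Tendsto dk atTop (𝓝 d) ∧ (∀ k, 0 < tk k) ∧ Tendsto tk atTop (𝓝 0) ∧
    Tendsto ηk atTop (𝓝 η) ∧
    ∀ k, ηk k ∈ regNormal Ω (x + tk k • dk k)}

/-- The pair `(ξ, r)` as an element of the ℓ²-product `H ×₂ ℝ`. -/
def pl2 (ξ : H) (r : ℝ) : WithLp 2 (H × ℝ) := (WithLp.equiv 2 (H × ℝ)).symm (ξ, r)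

/-- Epigraph of `φ` as a subset of the ℓ²-product `H ×₂ ℝ`. -/
def epigraphSet (φ : H → ℝ) : Set (WithLp 2 (H × ℝ)) :=
  {p | φ ((WithLp.equiv 2 (H × ℝ)) p).1 ≤ ((WithLp.equiv 2 (H × ℝ)) p).2}

/-- Limiting subdifferential of `φ` at `x`. -/
def limSubdiff (φ : H → ℝ) (x : H) : Set H :=
  {ξ | pl2 ξ (-1) ∈ limNormal (epigraphSet φ) (pl2 x (φ x))}

/-- Directional limiting subdifferential of `φ` at `x` in direction `d`, where `φd`
denotes the directional derivative `φ'(x; d)`. -/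
def dirLimSubdiff (φ : H → ℝ) (x d : H) (φd : ℝ) : Set H :=
  {ξ | pl2 ξ (-1) ∈ dirLimNormal (epigraphSet φ) (pl2 x (φ x)) (pl2 d φd)}

/-- Directional neighborhood `B_{ε,δ}(d)`. -/
def dirNbhd (d : H) (ε δ : ℝ) : Set H :=
  {y | ‖y‖ ≤ ε ∧ ‖‖d‖ • y - ‖y‖ • d‖ ≤ δ * (‖y‖ * ‖d‖)}

end Cones

section Problem

variable {n l : ℕ}

/-- `F' x d` is the directional derivative of `F` at `x` in direction `d`. -/
def IsDirDeriv (F : Eu n → Eu l) (F' : Eu n → Eu n → Eu l) : Prop :=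
  ∀ x d : Eu n,
    Tendsto (fun t : ℝ => t⁻¹ • (F (x + t • d) - F x)) (𝓝[>] (0:ℝ)) (𝓝 (F' x d))

/-- Limiting subdifferential of the scalarization `⟨λ, F⟩` at `x`. -/
def scalSubdiff (F : Eu n → Eu l) (lam : Eu l) (x : Eu n) : Set (Eu n) :=
  limSubdiff (fun y => ⟪lam, F y⟫) x

/-- Directional limiting subdifferential of `⟨λ, F⟩` at `x` in direction `d`. -/
def scalDirSubdiff (F : Eu n → Eu l) (F' : Eu n → Eu n → Eu l) (lam : Eu l)
    (x d : Eu n) : Set (Eu n) :=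
  dirLimSubdiff (fun y => ⟪lam, F y⟫) x d ⟪lam, F' x d⟫

/-- Linearization cone. -/
def linCone (F : Eu n → Eu l) (F' : Eu n → Eu n → Eu l) (Γ : Set (Eu l)) (x : Eu n) :
    Set (Eu n) :=
  {d | F' x d ∈ tanCone Γ (F x)}

/-- Explicit critical cone `C(x̄)`. -/
def critCone (f : Eu n → ℝ) (F : Eu n → Eu l) (F' : Eu n → Eu n → Eu l)
    (Γ : Set (Eu l)) (x : Eu n) : Set (Eu n) :=
  {d | ⟪gradient f x, d⟫ ≤ 0 ∧ d ∈ linCone F F' Γ x}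

/-- Implicit critical cone `Ĉ(x̄)`. -/
def implCritCone (f : Eu n → ℝ) (F : Eu n → Eu l) (Γ : Set (Eu l)) (x : Eu n) :
    Set (Eu n) :=
  {d | ⟪gradient f x, d⟫ ≤ 0 ∧ d ∈ tanCone (F ⁻¹' Γ) x}

/-- M-stationarity. -/
def MStat (f : Eu n → ℝ) (F : Eu n → Eu l) (Γ : Set (Eu l)) (x : Eu n) : Prop :=
  ∃ lam : Eu l, -gradient f x ∈ scalSubdiff F lam x ∧ lam ∈ limNormal Γ (F x)

/-- M-stationarity in direction `d`. -/
def MStatDir (f : Eu n → ℝ) (F : Eu n → Eu l) (F' : Eu n → Eu n → Eu l)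
    (Γ : Set (Eu l)) (x d : Eu n) : Prop :=
  ∃ lam : Eu l, -gradient f x ∈ scalDirSubdiff F F' lam x d ∧
    lam ∈ dirLimNormal Γ (F x) (F' x d)

/-- Metric subregularity constraint qualification in direction `d`. -/
def MSCQdir (F : Eu n → Eu l) (Γ : Set (Eu l)) (x d : Eu n) : Prop :=
  ∃ ε > (0:ℝ), ∃ δ > (0:ℝ), ∃ κ > (0:ℝ), ∀ y : Eu n, y - x ∈ dirNbhd d ε δ →
    infDist y (F ⁻¹' Γ) ≤ κ * infDist (F y) Γ

/-- Metric subregularity constraint qualification. -/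
def MSCQ (F : Eu n → Eu l) (Γ : Set (Eu l)) (x : Eu n) : Prop := MSCQdir F Γ x 0

/-- AM-stationary sequence w.r.t. `x`. -/
def AMSeq (f : Eu n → ℝ) (F : Eu n → Eu l) (Γ : Set (Eu l)) (x : Eu n)
    (xk : ℕ → Eu n) (lamk δk : ℕ → Eu l) (εk : ℕ → Eu n) : Prop :=
  (∀ k, εk k - gradient f (xk k) ∈ scalSubdiff F (lamk k) (xk k)) ∧
  (∀ k, lamk k ∈ limNormal Γ (F (xk k) - δk k)) ∧
  Tendsto xk atTop (𝓝 x) ∧ Tendsto δk atTop (𝓝 0) ∧ Tendsto εk atTop (𝓝 0)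

/-- AM-stationarity. -/
def AMStat (f : Eu n → ℝ) (F : Eu n → Eu l) (Γ : Set (Eu l)) (x : Eu n) : Prop :=
  ∃ xk lamk δk εk, AMSeq f F Γ x xk lamk δk εk

/-- AM-stationary sequence w.r.t. `x` in direction `d`. -/
def AMSeqDir (f : Eu n → ℝ) (F : Eu n → Eu l) (Γ : Set (Eu l)) (x : Eu n)
    (xk : ℕ → Eu n) (lamk δk : ℕ → Eu l) (εk : ℕ → Eu n) (d : Eu n) : Prop :=
  AMSeq f F Γ x xk lamk δk εk ∧
  (∀ k, xk k ≠ x) ∧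
  Tendsto (fun k => ‖xk k - x‖⁻¹ • (xk k - x)) atTop (𝓝 d) ∧
  Tendsto (fun k => ‖xk k - x‖⁻¹ • δk k) atTop (𝓝 (0 : Eu l)) ∧
  (∃ θ : ℕ → ℝ, (∀ k, 0 ≤ θ k) ∧ Tendsto θ atTop (𝓝 0) ∧
    ∀ k, ‖‖δk k‖ • lamk k - ‖lamk k‖ • δk k‖ ≤ ‖δk k‖ * ‖lamk k‖ * θ k) ∧
  (∃ M : ℝ, ∀ k, ‖δk k‖ * ‖lamk k‖ / ‖xk k - x‖ ≤ M)

/-- AM-stationarity in direction `d`. -/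
def AMStatDir (f : Eu n → ℝ) (F : Eu n → Eu l) (Γ : Set (Eu l)) (x d : Eu n) : Prop :=
  ∃ xk lamk δk εk, AMSeqDir f F Γ x xk lamk δk εk d

/-- The Minkowski sum `Σ_i |λ_i| ∂(sgn(λ_i) F_i)(x; d)`. -/
def dirSumSet (F : Eu n → Eu l) (F' : Eu n → Eu n → Eu l) (lam : Eu l) (x d : Eu n) :
    Set (Eu n) :=
  {v | ∃ s : Fin l → Eu n,
    (∀ i, s i ∈ |lam i| • dirLimSubdiff (fun y => Real.sign (lam i) * F y i) x d
        (Real.sign (lam i) * F' x d i)) ∧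
    v = ∑ i, s i}

/-- Standing sum-rule assumption. -/
def SumRule (F : Eu n → Eu l) (F' : Eu n → Eu n → Eu l) : Prop :=
  ∀ (x d : Eu n) (lam : Eu l), scalDirSubdiff F F' lam x d = dirSumSet F F' lam x d

end Problem

/-! A regular normal `(ξ, -1)` to the epigraph of `φ` at a point `(y, r)` forces `r = φ y` and says
that `ξ` is a regular subgradient of `φ` at `y`. Directional limiting subgradients are therefore
limits of regular subgradients at points `x + t e` with `t ↓ 0`, `e → d`.

A regular subgradient of `f + g` is nearly a sum of regular subgradients of `f` and of `g` at nearby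
points: minimise `f u + g w + N ‖u - w‖²` for large `N`. If `g` is Lipschitz its subgradients are
bounded, so passing to a subsequence gives the inclusion for a sum of two functions and, by
induction, for `⟨λ, F⟩ = ∑ i, λ i F i`.

If `g` is strictly differentiable, its gradient is its only directional limiting subgradient, so
the inclusion applied to `f = (f + g) + (-g)` is the reverse inclusion for `f + g`. -/

section RegularNormals

theorem pl2_mem_epigraphSet {H : Type*} {φ : H → ℝ} {y : H} {r : ℝ} :
    pl2 y r ∈ epigraphSet φ ↔ φ y ≤ r :=
  Iff.rfl

theorem tendsto_pl2 {H ι : Type*} [NormedAddCommGroup H] {l : Filter ι} {v : ι → H} {r : ι → ℝ}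
    {y : H} {s : ℝ} (hv : Tendsto v l (𝓝 y)) (hr : Tendsto r l (𝓝 s)) :
    Tendsto (fun i => pl2 (v i) (r i)) l (𝓝 (pl2 y s)) :=
  ((WithLp.prod_continuous_toLp 2 H ℝ).tendsto (y, s)).comp (hv.prodMk_nhds hr)

variable {H : Type*} [NormedAddCommGroup H] [InnerProductSpace ℝ H] {φ : H → ℝ} {y ξ : H}

/-- The regular (Fréchet) subdifferential, given by its `ε`-inequality; it describes the regular
normals to the epigraph of the form `(ξ, -1)` without mentioning the epigraph. -/
def regSubdiff (φ : H → ℝ) (y : H) : Set H :=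
  {ξ | ∀ ε > 0, ∀ᶠ z in 𝓝 y, φ y + ⟪ξ, z - y⟫ - ε * ‖z - y‖ ≤ φ z}

theorem inner_pl2 (v w : H) (r s : ℝ) : ⟪pl2 v r, pl2 w s⟫ = ⟪v, w⟫ + r * s := by
  rw [WithLp.prod_inner_apply]
  simp [pl2, mul_comm]

theorem pl2_add_smul_pl2 (v w : H) (r s t : ℝ) :
    pl2 v r + t • pl2 w s = pl2 (v + t • w) (r + t * s) :=
  rfl

theorem smul_mem_regNormal {Ω : Set H} {η : H} {c : ℝ} (hc : 0 ≤ c) (hη : η ∈ regNormal Ω y) :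
    c • η ∈ regNormal Ω y := by
  refine ⟨hη.1, fun w hw => ?_⟩
  rw [real_inner_smul_right]
  exact mul_nonpos_of_nonneg_of_nonpos hc (hη.2 w hw)

theorem eq_apply_of_pl2_mem_regNormal_epigraphSet {r s : ℝ} (hs : s < 0)
    (h : pl2 ξ s ∈ regNormal (epigraphSet φ) (pl2 y r)) : r = φ y := by
  by_contra hne
  have hlt : 0 < r - φ y := sub_pos.mpr (lt_of_le_of_ne h.1 (Ne.symm hne))
  have hdown : pl2 0 (-1) ∈ tanCone (epigraphSet φ) (pl2 y r) := by
    refine ⟨h.1, fun _ => pl2 0 (-1), fun k => (r - φ y) * (1 / ((k : ℝ) + 1)),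
      tendsto_const_nhds, fun k => by positivity, ?_, fun k => ?_⟩
    · simpa using (tendsto_one_div_add_atTop_nhds_zero_nat (𝕜 := ℝ)).const_mul (r - φ y)
    · have hk : 1 / ((k : ℝ) + 1) ≤ 1 := by
        rw [div_le_one (by positivity)]
        linarith [k.cast_nonneg (α := ℝ)]
      rw [pl2_add_smul_pl2, pl2_mem_epigraphSet, smul_zero, add_zero]
      linarith [mul_le_of_le_one_right hlt.le hk]
  have hinner := h.2 _ hdown
  rw [inner_pl2, inner_zero_left] at hinner
  linarith

theorem exists_subseq_tendsto_inv_norm_smul [FiniteDimensional ℝ H] {h : ℕ → H}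
    (hne : ∀ k, h k ≠ 0) :
    ∃ (u : H) (σ : ℕ → ℕ), StrictMono σ ∧
      Tendsto (fun k => ‖h (σ k)‖⁻¹ • h (σ k)) atTop (𝓝 u) := by
  have hsphere (k : ℕ) : ‖h k‖⁻¹ • h k ∈ sphere (0 : H) 1 := by
    rw [mem_sphere_zero_iff_norm, norm_smul, norm_inv, norm_norm,
      inv_mul_cancel₀ (norm_ne_zero_iff.mpr (hne k))]
  obtain ⟨u, -, σ, hσ, hu⟩ := (isCompact_sphere (0 : H) 1).tendsto_subseq hsphere
  exact ⟨u, σ, hσ, hu⟩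

theorem mem_regSubdiff_of_pl2_mem_regNormal [FiniteDimensional ℝ H]
    (h : pl2 ξ (-1) ∈ regNormal (epigraphSet φ) (pl2 y (φ y))) : ξ ∈ regSubdiff φ y := by
  by_contra hξ
  simp only [regSubdiff, mem_ofPred_eq, not_forall] at hξ
  obtain ⟨ε, hε, hfail⟩ := hξ
  obtain ⟨z, hz, hφz⟩ := exists_seq_forall_of_frequently (not_eventually.mp hfail)
  have hne (k : ℕ) : z k - y ≠ 0 := fun h0 => hφz k (by simp [sub_eq_zero.mp h0])
  obtain ⟨u, σ, hσ, hu⟩ := exists_subseq_tendsto_inv_norm_smul hne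
  have htangent : pl2 u (⟪ξ, u⟫ - ε) ∈ tanCone (epigraphSet φ) (pl2 y (φ y)) := by
    refine ⟨h.1, fun k => pl2 (‖z (σ k) - y‖⁻¹ • (z (σ k) - y))
        (⟪ξ, ‖z (σ k) - y‖⁻¹ • (z (σ k) - y)⟫ - ε), fun k => ‖z (σ k) - y‖,
      tendsto_pl2 hu ((tendsto_const_nhds.inner hu).sub_const ε),
      fun k => norm_pos_iff.mpr (hne _), ?_, fun k => ?_⟩
    · simpa [Function.comp_def] using ((hz.sub_const y).norm).comp hσ.tendsto_atTop
    · have hnorm := norm_ne_zero_iff.mpr (hne (σ k))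
      rw [pl2_add_smul_pl2, pl2_mem_epigraphSet, smul_inv_smul₀ hnorm, add_sub_cancel,
        real_inner_smul_right, mul_sub, mul_inv_cancel_left₀ hnorm]
      linarith [not_le.mp (hφz (σ k))]
  have hinner := h.2 _ htangent
  rw [inner_pl2, real_inner_comm] at hinner
  linarith

theorem pl2_mem_regNormal_of_mem_regSubdiff (h : ξ ∈ regSubdiff φ y) :
    pl2 ξ (-1) ∈ regNormal (epigraphSet φ) (pl2 y (φ y)) := by
  refine ⟨le_refl (φ y), ?_⟩
  rintro w ⟨-, dk, tk, hdk, htk, htk0, hmem⟩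
  have hfst := ((WithLp.continuous_fst 2 H ℝ).tendsto w).comp hdk
  have hsnd := ((WithLp.continuous_snd 2 H ℝ).tendsto w).comp hdk
  have hz : Tendsto (fun k => y + tk k • (dk k).fst) atTop (𝓝 y) := by
    simpa using (htk0.smul hfst).const_add y
  have hε (ε : ℝ) (hε : 0 < ε) : ⟪ξ, w.fst⟫ - ε * ‖w.fst‖ ≤ w.snd := by
    refine le_of_tendsto_of_tendsto
      ((tendsto_const_nhds.inner hfst).sub (hfst.norm.const_mul ε)) hsnd ?_
    filter_upwards [hz.eventually (h ε hε)] with k hk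
    have hepi : φ (y + tk k • (dk k).fst) ≤ φ y + tk k * (dk k).snd := hmem k
    rw [add_sub_cancel_left, real_inner_smul_right, norm_smul, Real.norm_of_nonneg (htk k).le]
      at hk
    refine le_of_mul_le_mul_left ?_ (htk k)
    simp only [Function.comp_apply]
    linarith
  have hlim : Tendsto (fun ε : ℝ => ⟪ξ, w.fst⟫ - ε * ‖w.fst‖) (𝓝[>] 0) (𝓝 ⟪ξ, w.fst⟫) := by
    refine (Continuous.tendsto' ?_ 0 _ (by simp)).mono_left nhdsWithin_le_nhds
    fun_prop
  have hle : ⟪ξ, w.fst⟫ ≤ w.snd := le_of_tendsto hlim (eventually_mem_nhdsWithin.mono hε)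
  change ⟪pl2 w.fst w.snd, pl2 ξ (-1)⟫ ≤ 0
  rw [inner_pl2, real_inner_comm]
  linarith

end RegularNormals

section RegularSubdifferential

variable {H : Type*} [NormedAddCommGroup H] [InnerProductSpace ℝ H] {φ ψ : H → ℝ} {y ξ v : H}

theorem smul_mem_regSubdiff_const_mul {c : ℝ} (hc : 0 < c) (h : ξ ∈ regSubdiff φ y) :
    c • ξ ∈ regSubdiff (fun z => c * φ z) y := by
  intro ε hε
  filter_upwards [h (ε / c) (by positivity)] with z hz
  rw [real_inner_smul_left]
  calc c * φ y + c * ⟪ξ, z - y⟫ - ε * ‖z - y‖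
      = c * (φ y + ⟪ξ, z - y⟫ - ε / c * ‖z - y‖) := by field_simp
    _ ≤ c * φ z := mul_le_mul_of_nonneg_left hz hc.le

theorem zero_mem_regSubdiff_of_isLocalMin (hmin : IsLocalMin φ y) : 0 ∈ regSubdiff φ y := by
  intro ε hε
  filter_upwards [hmin] with z hz
  rw [inner_zero_left]
  linarith [mul_nonneg hε.le (norm_nonneg (z - y))]

theorem sub_mem_regSubdiff_of_hasFDerivAt (hξ : ξ ∈ regSubdiff (fun z => φ z + ψ z) y)
    (hψ : HasFDerivAt ψ (innerSL ℝ v) y) : ξ - v ∈ regSubdiff φ y := by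
  intro ε hε
  filter_upwards [hξ (ε / 2) (half_pos hε), hψ.isLittleO.def (half_pos hε)] with z hz hψz
  rw [innerSL_apply_apply, Real.norm_eq_abs] at hψz
  rw [inner_sub_left]
  linarith [le_abs_self (ψ z - ψ y - ⟪v, z - y⟫)]

theorem hasFDerivAt_const_mul_norm_sub_sq (c : ℝ) (a z : H) :
    HasFDerivAt (fun u => c * ‖u - a‖ ^ 2) (innerSL ℝ ((2 * c) • (z - a))) z := by
  refine (((hasFDerivAt_id z).sub_const a).norm_sq.const_mul c).congr_fderiv ?_
  ext u
  simp
  ring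

theorem norm_innerSL_sub_le_of_mem_regSubdiff (hξ : ξ ∈ regSubdiff φ y) (g : H →L[ℝ] ℝ) {c : ℝ}
    (hc : 0 ≤ c) (h : ∀ᶠ z in 𝓝 y, φ z - φ y - g (z - y) ≤ c * ‖z - y‖) :
    ‖innerSL ℝ ξ - g‖ ≤ c := by
  have hupper (ε : ℝ) (hε : 0 < ε) (w : H) : (innerSL ℝ ξ - g) w ≤ (c + ε) * ‖w‖ := by
    have hline : Tendsto (fun t : ℝ => y + t • w) (𝓝[>] 0) (𝓝 y) :=
      (Continuous.tendsto' (by fun_prop) 0 y (by simp)).mono_left nhdsWithin_le_nhds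
    obtain ⟨t, ⟨hlower, hle⟩, ht⟩ :=
      ((hline.eventually ((hξ ε hε).and h)).and eventually_mem_nhdsWithin).exists
    rw [mem_Ioi] at ht
    rw [add_sub_cancel_left, norm_smul, Real.norm_of_nonneg ht.le] at hlower hle
    rw [real_inner_smul_right] at hlower
    rw [map_smul, smul_eq_mul] at hle
    rw [sub_apply, innerSL_apply_apply]
    refine le_of_mul_le_mul_left ?_ ht
    linarith
  refine le_of_forall_pos_le_add fun ε hε => ?_
  refine ContinuousLinearMap.opNorm_le_bound _ (by positivity) fun w => abs_le.mpr ⟨?_, ?_⟩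
  · have := hupper ε hε (-w)
    rw [map_neg, norm_neg] at this
    linarith
  · exact hupper ε hε w

theorem norm_le_of_mem_regSubdiff_of_lipschitzOnWith {K : NNReal} {t : Set H} (ht : t ∈ 𝓝 y)
    (hφ : LipschitzOnWith K φ t) (hξ : ξ ∈ regSubdiff φ y) : ‖ξ‖ ≤ K := by
  have hle : ∀ᶠ z in 𝓝 y, φ z - φ y - (0 : H →L[ℝ] ℝ) (z - y) ≤ K * ‖z - y‖ := by
    filter_upwards [ht] with z hz
    have := hφ.dist_le_mul z hz y (mem_of_mem_nhds ht)
    rw [Real.dist_eq, dist_eq_norm] at this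
    simpa using (le_abs_self _).trans this
  simpa using norm_innerSL_sub_le_of_mem_regSubdiff hξ 0 K.coe_nonneg hle

end RegularSubdifferential

section FuzzySumRule

variable {H : Type*} [NormedAddCommGroup H] {f g : H → ℝ} {y ξ : H}

/-- The decoupled objective `f u + g w` on `H × H`, in which the constraint `u = w` is replaced by
the quadratic penalty `N ‖u - w‖²`. -/
def decoupledSum (f g : H → ℝ) (N : ℝ) (p : H × H) : ℝ :=
  f p.1 + g p.2 + N * ‖p.1 - p.2‖ ^ 2

theorem exists_isMinOn_decoupledSum {s : Set H} (hs : IsCompact s) (hne : s.Nonempty)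
    (hf : LowerSemicontinuousOn f s) (hg : LowerSemicontinuousOn g s) (N : ℝ) :
    ∃ u ∈ s, ∃ w ∈ s, IsMinOn (decoupledSum f g N) (s ×ˢ s) (u, w) := by
  have hlsc : LowerSemicontinuousOn (decoupledSum f g N) (s ×ˢ s) := by
    have hfst : LowerSemicontinuousOn (fun p : H × H => f p.1) (s ×ˢ s) :=
      hf.comp continuousOn_fst mapsTo_fst_prod
    have hsnd : LowerSemicontinuousOn (fun p : H × H => g p.2) (s ×ˢ s) :=
      hg.comp continuousOn_snd mapsTo_snd_prod
    have hpen : ContinuousOn (fun p : H × H => N * ‖p.1 - p.2‖ ^ 2) (s ×ˢ s) := by fun_prop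
    exact (hfst.add hsnd).add hpen.lowerSemicontinuousOn
  obtain ⟨⟨u, w⟩, ⟨hu, hw⟩, hmin⟩ := hlsc.exists_isMinOn (hne.prod hne) (hs.prod hs)
  exact ⟨u, hu, w, hw, hmin⟩

variable [InnerProductSpace ℝ H]

/- Comparing the minimiser `(u, w)` with `(u, u)` gives `N ‖u - w‖² ≤ L ‖u - w‖`; comparing it with
`(y, y)` then bounds `(f + g) u`. -/
theorem exists_isLocalMin_decoupledSum [FiniteDimensional ℝ H] {r m : ℝ} {L : NNReal}
    (hr : 0 < r) (hm : 0 < m) (hf : LowerSemicontinuousOn f (closedBall y r))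
    (hg : LipschitzOnWith L g (closedBall y r))
    (hgrowth : ∀ z ∈ closedBall y r, r / 2 ≤ ‖z - y‖ → f y + g y + m ≤ f z + g z) :
    ∃ (N : ℝ) (u w : H), ‖u - y‖ < r / 2 ∧ ‖w - y‖ < r ∧
      IsLocalMin (decoupledSum f g N) (u, w) := by
  set δ := min (r / 2) (m / (L + 1))
  have hδ : 0 < δ := by positivity
  set N := (L + 1) / δ
  have hy : y ∈ closedBall y r := mem_closedBall_self hr.le
  obtain ⟨u, hu, w, hw, hmin⟩ := exists_isMinOn_decoupledSum (isCompact_closedBall y r) ⟨y, hy⟩ hf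
    hg.continuousOn.lowerSemicontinuousOn N
  have hglip : g u - g w ≤ L * ‖u - w‖ := by
    rw [← dist_eq_norm]
    exact (le_abs_self _).trans (hg.dist_le_mul u hu w hw)
  have hcompare {z : H} (hz : z ∈ closedBall y r) : f u + g w + N * ‖u - w‖ ^ 2 ≤ f z + g z := by
    simpa [decoupledSum] using hmin (show (z, z) ∈ closedBall y r ×ˢ closedBall y r from ⟨hz, hz⟩)
  have huw : ‖u - w‖ < δ := by
    by_contra! hle
    have hNδ : L + 1 ≤ N * ‖u - w‖ := by
      calc (L + 1 : ℝ) = N * δ := (div_mul_cancel₀ _ hδ.ne').symm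
        _ ≤ N * ‖u - w‖ := by gcongr
    nlinarith [hcompare hu]
  have huy : ‖u - y‖ < r / 2 := by
    by_contra! hle
    have hLm : L * ‖u - w‖ < m := by
      have hδm : δ * (L + 1) ≤ m := (le_div_iff₀ (by positivity)).mp (min_le_right _ _)
      nlinarith
    have hpen : 0 ≤ N * ‖u - w‖ ^ 2 := by positivity
    linarith [hcompare hy, hgrowth u hu hle]
  have hwy : ‖w - y‖ < r := by
    have htri := norm_sub_le_norm_sub_add_norm_sub w u y
    rw [norm_sub_rev w u] at htri
    linarith [min_le_left (r / 2) (m / (L + 1))]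
  refine ⟨N, u, w, huy, hwy, hmin.isLocalMin (prod_mem_nhds ?_ ?_)⟩ <;>
    refine closedBall_mem_nhds_of_mem (mem_ball_iff_norm.mpr ?_) <;> linarith

theorem mem_regSubdiff_of_isLocalMin_decoupledSum {N : ℝ} {u w : H}
    (h : IsLocalMin (decoupledSum f g N) (u, w)) :
    -((2 * N) • (u - w)) ∈ regSubdiff f u ∧ (2 * N) • (u - w) ∈ regSubdiff g w := by
  constructor
  · have hmin : IsLocalMin (fun z => f z + N * ‖z - w‖ ^ 2) u := by
      have hpair : ContinuousAt (fun z => (z, w)) u := by fun_prop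
      filter_upwards [hpair.eventually h] with z hz
      simp only [decoupledSum] at hz
      linarith
    simpa using sub_mem_regSubdiff_of_hasFDerivAt (zero_mem_regSubdiff_of_isLocalMin hmin)
      (hasFDerivAt_const_mul_norm_sub_sq N w u)
  · have hmin : IsLocalMin (fun z => g z + N * ‖z - u‖ ^ 2) w := by
      have hpair : ContinuousAt (fun z => (u, z)) w := by fun_prop
      filter_upwards [hpair.eventually h] with z hz
      simp only [decoupledSum, norm_sub_rev u] at hz
      linarith
    simpa [← smul_neg] using
      sub_mem_regSubdiff_of_hasFDerivAt (zero_mem_regSubdiff_of_isLocalMin hmin)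
        (hasFDerivAt_const_mul_norm_sub_sq N u w)

theorem exists_penalty_growth_of_mem_regSubdiff {φ : H → ℝ} {t : Set H} {δ : ℝ} (ht : t ∈ 𝓝 y)
    (hδ : 0 < δ) (hξ : ξ ∈ regSubdiff φ y) :
    ∃ r, 0 < r ∧ r ≤ δ ∧ closedBall y r ⊆ t ∧ ∀ z ∈ closedBall y r, r / 2 ≤ ‖z - y‖ →
      φ y + δ * r / 8 ≤ φ z - ⟪ξ, z - y⟫ + δ / r * ‖z - y‖ ^ 2 := by
  obtain ⟨r₀, hr₀, hball⟩ := nhds_basis_closedBall.eventually_iff.mp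
    ((hξ (δ / 4) (by positivity)).and ht)
  set r := min r₀ δ
  have hr : 0 < r := by positivity
  have hball' {z : H} (hz : z ∈ closedBall y r) :=
    hball (closedBall_subset_closedBall (min_le_left _ _) hz)
  refine ⟨r, hr, min_le_right _ _, fun z hz => (hball' hz).2, fun z hz hzy => ?_⟩
  have hpen : δ / 4 * ‖z - y‖ + δ * r / 8 ≤ δ / r * ‖z - y‖ ^ 2 := by
    rw [div_mul_eq_mul_div δ r, le_div_iff₀ hr]
    have hr_sq : δ * (r * r) ≤ δ * (r * (2 * ‖z - y‖)) := by gcongr; linarith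
    have hnorm_sq : δ * (r * ‖z - y‖) ≤ δ * (2 * ‖z - y‖ * ‖z - y‖) := by gcongr; linarith
    linarith
  linarith [(hball' hz).1]

/- The penalty `(δ / r) ‖z - y‖²` makes `y` a minimiser with positive growth, while its gradient on
the ball of radius `r / 2` stays below `δ`. -/
theorem exists_regSubdiff_add_near [FiniteDimensional ℝ H] {t : Set H} {L : NNReal} {δ : ℝ}
    (ht : t ∈ 𝓝 y) (hf : LowerSemicontinuousOn f t) (hg : LipschitzOnWith L g t) (hδ : 0 < δ)
    (hξ : ξ ∈ regSubdiff (fun z => f z + g z) y) :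
    ∃ u w a b : H, ‖u - y‖ < δ ∧ ‖w - y‖ < δ ∧ a ∈ regSubdiff f u ∧ b ∈ regSubdiff g w ∧
      ‖b‖ ≤ L ∧ ‖a + b - ξ‖ < δ := by
  obtain ⟨r, hr, hrδ, hrt, hpen⟩ := exists_penalty_growth_of_mem_regSubdiff ht hδ hξ
  set q : H → ℝ := fun z => innerSL ℝ (-ξ) z + δ / r * ‖z - y‖ ^ 2 with hq
  have hgrowth (z : H) (hz : z ∈ closedBall y r) (hzy : r / 2 ≤ ‖z - y‖) :
      f y + q y + g y + δ * r / 8 ≤ f z + q z + g z := by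
    have hz_pen := hpen z hz hzy
    simp only [hq, innerSL_apply_apply, inner_neg_left, sub_self, norm_zero, inner_sub_right]
      at hz_pen ⊢
    linarith
  have hqc : Continuous q := by fun_prop
  obtain ⟨N, u, w, hu, hw, hmin⟩ := exists_isLocalMin_decoupledSum hr (by positivity)
    ((hf.mono hrt).add hqc.continuousOn.lowerSemicontinuousOn) (hg.mono hrt) hgrowth
  obtain ⟨ha, hb⟩ := mem_regSubdiff_of_isLocalMin_decoupledSum hmin
  have hq' : HasFDerivAt q (innerSL ℝ (-ξ + (2 * (δ / r)) • (u - y))) u := by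
    rw [map_add]
    exact (innerSL ℝ (-ξ)).hasFDerivAt.add (hasFDerivAt_const_mul_norm_sub_sq _ y u)
  have hbL := norm_le_of_mem_regSubdiff_of_lipschitzOnWith
    (mem_of_superset (closedBall_mem_nhds_of_mem (mem_ball_iff_norm.mpr hw)) hrt) hg hb
  refine ⟨u, w, _, _, by linarith, hw.trans_le hrδ, sub_mem_regSubdiff_of_hasFDerivAt ha hq', hb,
    hbL, ?_⟩
  rw [show -((2 * N) • (u - w)) - (-ξ + (2 * (δ / r)) • (u - y)) + (2 * N) • (u - w) - ξ
      = -((2 * (δ / r)) • (u - y)) by abel, norm_neg, norm_smul,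
    Real.norm_of_nonneg (by positivity)]
  calc 2 * (δ / r) * ‖u - y‖ < 2 * (δ / r) * (r / 2) := by gcongr
    _ = δ := by field_simp

end FuzzySumRule

section DirectionalSubdifferential

theorem tendsto_add_smul {α H : Type*} [NormedAddCommGroup H] [NormedSpace ℝ H] {l : Filter α}
    {τ : α → ℝ} {e : α → H} {d : H} (hτ : Tendsto τ l (𝓝[>] 0)) (he : Tendsto e l (𝓝 d)) (x : H) :
    Tendsto (fun i => x + τ i • e i) l (𝓝 x) := by
  simpa using ((tendsto_nhds_of_tendsto_nhdsWithin hτ).smul he).const_add x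

theorem tendsto_inv_smul_sub_of_lipschitzOnWith {H E : Type*} [NormedAddCommGroup H]
    [NormedSpace ℝ H] [NormedAddCommGroup E] [NormedSpace ℝ E] {F : H → E} {x d : H} {v : E}
    {t : Set H} {K : NNReal} (ht : t ∈ 𝓝 x) (hF : LipschitzOnWith K F t)
    (hv : Tendsto (fun τ : ℝ => τ⁻¹ • (F (x + τ • d) - F x)) (𝓝[>] 0) (𝓝 v)) :
    Tendsto (fun p : ℝ × H => p.1⁻¹ • (F (x + p.1 • p.2) - F x)) (𝓝[>] 0 ×ˢ 𝓝 d) (𝓝 v) := by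
  refine tendsto_of_tendsto_of_dist (hv.comp tendsto_fst) ?_
  have hK : Tendsto (fun p : ℝ × H => K * dist d p.2) (𝓝[>] 0 ×ˢ 𝓝 d) (𝓝 0) := by
    have hdist := tendsto_iff_dist_tendsto_zero.mp (tendsto_snd (f := 𝓝[>] (0 : ℝ)) (g := 𝓝 d))
    simpa [dist_comm] using hdist.const_mul (K : ℝ)
  refine squeeze_zero' (.of_forall fun _ => dist_nonneg) ?_ hK
  filter_upwards [(tendsto_add_smul tendsto_fst tendsto_const_nhds x).eventually ht,
    (tendsto_add_smul tendsto_fst tendsto_snd x).eventually ht,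
    tendsto_fst.eventually eventually_mem_nhdsWithin] with ⟨τ, e⟩ hd he (hτ : 0 < τ)
  calc dist (τ⁻¹ • (F (x + τ • d) - F x)) (τ⁻¹ • (F (x + τ • e) - F x))
      = τ⁻¹ * dist (F (x + τ • d)) (F (x + τ • e)) := by
        rw [dist_smul₀, dist_sub_right, Real.norm_of_nonneg (inv_pos.mpr hτ).le]
    _ ≤ τ⁻¹ * (K * dist (x + τ • d) (x + τ • e)) := by
        gcongr
        exact hF.dist_le_mul _ hd _ he
    _ = K * dist d e := by
        rw [dist_add_left, dist_smul₀, Real.norm_of_nonneg hτ.le]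
        field_simp

variable {H : Type*} [NormedAddCommGroup H] [InnerProductSpace ℝ H] {φ f g : H → ℝ} {x d ξ : H}

/-- The limits of regular subgradients of `φ` at points approaching `x` from the direction `d`. If
`φ` is Lipschitz near `x` and has a directional derivative at `x` along `d`, this is the directional
limiting subdifferential, described without the epigraph and the value of that derivative. -/
def seqDirSubdiff (φ : H → ℝ) (x d : H) : Set H :=
  {ξ | ∃ (dk : ℕ → H) (tk : ℕ → ℝ) (ξk : ℕ → H), Tendsto dk atTop (𝓝 d) ∧
    Tendsto tk atTop (𝓝[>] 0) ∧ Tendsto ξk atTop (𝓝 ξ) ∧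
    ∀ᶠ k in atTop, ξk k ∈ regSubdiff φ (x + tk k • dk k)}

theorem dirLimSubdiff_subset_seqDirSubdiff [FiniteDimensional ℝ H] (φd : ℝ) :
    dirLimSubdiff φ x d φd ⊆ seqDirSubdiff φ x d := by
  rintro ξ ⟨-, dk, tk, ηk, hdk, htk, htk0, hηk, hmem⟩
  have hfst : Tendsto (fun k => (ηk k).fst) atTop (𝓝 ξ) :=
    ((WithLp.continuous_fst 2 H ℝ).tendsto _).comp hηk
  have hsnd : Tendsto (fun k => (ηk k).snd) atTop (𝓝 (-1)) :=
    ((WithLp.continuous_snd 2 H ℝ).tendsto _).comp hηk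
  refine ⟨fun k => (dk k).fst, tk, fun k => (-(ηk k).snd)⁻¹ • (ηk k).fst,
    ((WithLp.continuous_fst 2 H ℝ).tendsto _).comp hdk,
    tendsto_nhdsWithin_iff.mpr ⟨htk0, .of_forall htk⟩,
    by simpa using (hsnd.neg.inv₀ (by norm_num)).smul hfst, ?_⟩
  filter_upwards [hsnd.eventually_lt_const neg_one_lt_zero] with k hk
  have hnormal : pl2 (ηk k).fst (ηk k).snd ∈ regNormal (epigraphSet φ)
      (pl2 (x + tk k • (dk k).fst) (φ x + tk k * (dk k).snd)) := hmem k
  rw [eq_apply_of_pl2_mem_regNormal_epigraphSet hk hnormal] at hnormal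
  have hscale : (-(ηk k).snd)⁻¹ • pl2 (ηk k).fst (ηk k).snd =
      pl2 ((-(ηk k).snd)⁻¹ • (ηk k).fst) (-1) := by
    rw [← inv_mul_cancel₀ hk.ne, ← neg_mul, ← inv_neg]
    rfl
  apply mem_regSubdiff_of_pl2_mem_regNormal
  rw [← hscale]
  exact smul_mem_regNormal (inv_nonneg.mpr (neg_pos.mpr hk).le) hnormal

theorem seqDirSubdiff_subset_dirLimSubdiff {φd : ℝ}
    (hφ : Tendsto (fun p : ℝ × H => p.1⁻¹ • (φ (x + p.1 • p.2) - φ x)) (𝓝[>] 0 ×ˢ 𝓝 d) (𝓝 φd)) :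
    seqDirSubdiff φ x d ⊆ dirLimSubdiff φ x d φd := by
  rintro ξ ⟨dk, tk, ξk, hdk, htk, hξk, hmem⟩
  obtain ⟨N, hN⟩ := eventually_atTop.mp (hmem.and (htk.eventually eventually_mem_nhdsWithin))
  have hshift := tendsto_add_atTop_nat N
  refine ⟨le_refl (φ x),
    fun k => pl2 (dk (k + N)) ((tk (k + N))⁻¹ • (φ (x + tk (k + N) • dk (k + N)) - φ x)),
    fun k => tk (k + N), fun k => pl2 (ξk (k + N)) (-1),
    tendsto_pl2 (hdk.comp hshift) ((hφ.comp (htk.prodMk hdk)).comp hshift),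
    fun k => (hN (k + N) (by omega)).2,
    (tendsto_nhds_of_tendsto_nhdsWithin htk).comp hshift,
    tendsto_pl2 (hξk.comp hshift) tendsto_const_nhds, fun k => ?_⟩
  obtain ⟨hsub, htpos⟩ := hN (k + N) (by omega)
  rw [pl2_add_smul_pl2, smul_eq_mul, mul_inv_cancel_left₀ (ne_of_gt htpos), add_sub_cancel]
  exact pl2_mem_regNormal_of_mem_regSubdiff hsub

theorem dirLimSubdiff_eq_seqDirSubdiff [FiniteDimensional ℝ H] {φd : ℝ} {t : Set H} {K : NNReal}
    (ht : t ∈ 𝓝 x) (hφ : LipschitzOnWith K φ t)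
    (hφd : Tendsto (fun τ : ℝ => τ⁻¹ • (φ (x + τ • d) - φ x)) (𝓝[>] 0) (𝓝 φd)) :
    dirLimSubdiff φ x d φd = seqDirSubdiff φ x d :=
  (dirLimSubdiff_subset_seqDirSubdiff φd).antisymm
    (seqDirSubdiff_subset_dirLimSubdiff (tendsto_inv_smul_sub_of_lipschitzOnWith ht hφ hφd))

theorem dirLimSubdiff_clm_comp_eq_seqDirSubdiff [FiniteDimensional ℝ H] {E : Type*}
    [NormedAddCommGroup E] [NormedSpace ℝ E] {F : H → E} {v : E} {t : Set H} {K : NNReal}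
    (ht : t ∈ 𝓝 x) (hF : LipschitzOnWith K F t)
    (hv : Tendsto (fun τ : ℝ => τ⁻¹ • (F (x + τ • d) - F x)) (𝓝[>] 0) (𝓝 v)) (L : E →L[ℝ] ℝ) :
    dirLimSubdiff (fun y => L (F y)) x d (L v) = seqDirSubdiff (fun y => L (F y)) x d := by
  refine dirLimSubdiff_eq_seqDirSubdiff ht (L.lipschitz.comp_lipschitzOnWith hF) ?_
  simpa [Function.comp_def] using (L.continuous.tendsto v).comp hv

theorem mem_seqDirSubdiff_of_norm_sub_le {dk u a : ℕ → H} {tk : ℕ → ℝ}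
    (hd : Tendsto dk atTop (𝓝 d)) (ht : Tendsto tk atTop (𝓝[>] 0))
    (hu : ∀ᶠ k in atTop, ‖u k - (x + tk k • dk k)‖ ≤ tk k ^ 2) (ha : Tendsto a atTop (𝓝 ξ))
    (hmem : ∀ᶠ k in atTop, a k ∈ regSubdiff φ (u k)) : ξ ∈ seqDirSubdiff φ x d := by
  have hpos : ∀ᶠ k in atTop, 0 < tk k := ht.eventually eventually_mem_nhdsWithin
  refine ⟨fun k => (tk k)⁻¹ • (u k - x), tk, a, ?_, ht, ha, ?_⟩
  · refine tendsto_of_tendsto_of_dist hd (squeeze_zero' (.of_forall fun _ => dist_nonneg) ?_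
      (tendsto_nhds_of_tendsto_nhdsWithin ht))
    filter_upwards [hu, hpos] with k hk htk
    calc dist (dk k) ((tk k)⁻¹ • (u k - x))
        = (tk k)⁻¹ * ‖u k - (x + tk k • dk k)‖ := by
          rw [dist_comm, dist_eq_norm, ← sub_sub, ← Real.norm_of_nonneg (inv_pos.mpr htk).le,
            ← norm_smul, smul_sub _ (u k - x), inv_smul_smul₀ htk.ne',
            Real.norm_of_nonneg (inv_pos.mpr htk).le]
      _ ≤ (tk k)⁻¹ * tk k ^ 2 := by gcongr
      _ = tk k := by field_simp
  · filter_upwards [hmem, hpos] with k hk htk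
    rwa [smul_inv_smul₀ htk.ne', add_sub_cancel]

theorem seqDirSubdiff_add_subset [FiniteDimensional ℝ H] {t : Set H} {L : NNReal} (ht : t ∈ 𝓝 x)
    (hf : LowerSemicontinuousOn f t) (hg : LipschitzOnWith L g t) :
    seqDirSubdiff (fun y => f y + g y) x d ⊆ seqDirSubdiff f x d + seqDirSubdiff g x d := by
  rintro ξ ⟨dk, tk, ξk, hdk, htk, hξk, hmem⟩
  have hsplit : ∀ᶠ k in atTop, ∃ u w a b : H, ‖u - (x + tk k • dk k)‖ < tk k ^ 2 ∧
      ‖w - (x + tk k • dk k)‖ < tk k ^ 2 ∧ a ∈ regSubdiff f u ∧ b ∈ regSubdiff g w ∧ ‖b‖ ≤ L ∧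
      ‖a + b - ξk k‖ < tk k ^ 2 := by
    filter_upwards [hmem, (tendsto_add_smul htk hdk x).eventually (eventually_mem_nhds_iff.mpr ht),
      htk.eventually eventually_mem_nhdsWithin] with k hk htk hpos
    exact exists_regSubdiff_add_near htk hf hg (pow_pos hpos 2) hk
  simp only [skolem, eventually_and] at hsplit
  obtain ⟨u, w, a, b, hu, hw, ha, hb, hbL, herr⟩ := hsplit
  obtain ⟨β, -, σ, hσ, hβ⟩ := (isCompact_closedBall (0 : H) L).tendsto_subseq'
    (hbL.mono fun _ => mem_closedBall_zero_iff.mpr).frequently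
  have hσt := hσ.tendsto_atTop
  have hα : Tendsto (a ∘ σ) atTop (𝓝 (ξ - β)) := by
    have hsq : Tendsto (fun k => tk k ^ 2) atTop (𝓝 0) := by
      simpa using (tendsto_nhds_of_tendsto_nhdsWithin htk).pow 2
    have hlim := squeeze_zero_norm' (herr.mono fun _ => le_of_lt) hsq
    simpa [Function.comp_def] using ((hlim.comp hσt).add (hξk.comp hσt)).sub hβ
  have hmem_of_near {c v : ℕ → H} {φ : H → ℝ} {γ : H}
      (hv : ∀ᶠ k in atTop, ‖v k - (x + tk k • dk k)‖ < tk k ^ 2)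
      (hc : ∀ᶠ k in atTop, c k ∈ regSubdiff φ (v k)) (hγ : Tendsto (c ∘ σ) atTop (𝓝 γ)) :
      γ ∈ seqDirSubdiff φ x d :=
    mem_seqDirSubdiff_of_norm_sub_le (hdk.comp hσt) (htk.comp hσt)
      (hσt.eventually (hv.mono fun _ => le_of_lt)) hγ (hσt.eventually hc)
  exact ⟨ξ - β, hmem_of_near hu ha hα, β, hmem_of_near hw hb hβ, sub_add_cancel ξ β⟩

theorem innerSL_eq_of_mem_seqDirSubdiff {g' : H →L[ℝ] ℝ} (hφ : HasStrictFDerivAt φ g' x)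
    (hξ : ξ ∈ seqDirSubdiff φ x d) : innerSL ℝ ξ = g' := by
  obtain ⟨dk, tk, ξk, hdk, htk, hξk, hmem⟩ := hξ
  refine eq_of_forall_dist_le fun ε hε => ?_
  have hstrict : ∀ᶠ y in 𝓝 x, ∀ᶠ z in 𝓝 y, φ z - φ y - g' (z - y) ≤ ε * ‖z - y‖ := by
    have hdiag : Tendsto (fun y : H => (y, y)) (𝓝 x) (𝓝 (x, x)) :=
      tendsto_id.prodMk_nhds tendsto_id
    filter_upwards [hdiag.eventually (hφ.isLittleO.def hε).eventually_nhds] with y hy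
    have hpair : Tendsto (fun z : H => (z, y)) (𝓝 y) (𝓝 (y, y)) :=
      tendsto_id.prodMk_nhds tendsto_const_nhds
    exact (hpair.eventually hy).mono fun z hz => (le_abs_self _).trans hz
  have hlim : Tendsto (fun k => dist (innerSL ℝ (ξk k)) g') atTop (𝓝 (dist (innerSL ℝ ξ) g')) :=
    (((innerSL ℝ).continuous.tendsto ξ).comp hξk).dist tendsto_const_nhds
  refine le_of_tendsto hlim ?_
  filter_upwards [hmem, (tendsto_add_smul htk hdk x).eventually hstrict] with k hk hle
  rw [dist_eq_norm]
  exact norm_innerSL_sub_le_of_mem_regSubdiff hk g' hε.le hle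

theorem seqDirSubdiff_zero : seqDirSubdiff (fun _ : H => (0 : ℝ)) x d = 0 := by
  refine Subset.antisymm (fun ξ hξ => ?_) (zero_subset.mpr ?_)
  · have hzero := innerSL_eq_of_mem_seqDirSubdiff (hasStrictFDerivAt_const 0 x) hξ
    exact innerSL_inj.mp (hzero.trans (map_zero (innerSL ℝ)).symm)
  · obtain ⟨tk, htk⟩ := exists_seq_tendsto (𝓝[>] (0 : ℝ))
    exact ⟨fun _ => d, tk, fun _ => 0, tendsto_const_nhds, htk, tendsto_const_nhds,
      .of_forall fun _ => zero_mem_regSubdiff_of_isLocalMin (.of_forall fun _ => le_rfl)⟩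

theorem smul_seqDirSubdiff_subset {c : ℝ} (hc : 0 < c) :
    c • seqDirSubdiff φ x d ⊆ seqDirSubdiff (fun y => c * φ y) x d := by
  rintro _ ⟨ξ, ⟨dk, tk, ξk, hdk, htk, hξk, hmem⟩, rfl⟩
  exact ⟨dk, tk, fun k => c • ξk k, hdk, htk, hξk.const_smul c,
    hmem.mono fun _ => smul_mem_regSubdiff_const_mul hc⟩

theorem seqDirSubdiff_const_mul {c : ℝ} (hc : 0 < c) :
    seqDirSubdiff (fun y => c * φ y) x d = c • seqDirSubdiff φ x d := by
  refine Subset.antisymm ?_ (smul_seqDirSubdiff_subset hc)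
  rw [subset_smul_set_iff₀ hc.ne']
  simpa [inv_mul_cancel_left₀ hc.ne'] using
    smul_seqDirSubdiff_subset (φ := fun y => c * φ y) (x := x) (d := d) (inv_pos.mpr hc)

theorem abs_mul_real_sign (c : ℝ) : |c| * Real.sign c = c := by
  rcases lt_trichotomy c 0 with hc | rfl | hc
  · rw [abs_of_neg hc, Real.sign_of_neg hc, neg_mul_neg, mul_one]
  · rw [abs_zero, zero_mul]
  · rw [abs_of_pos hc, Real.sign_of_pos hc, mul_one]

theorem abs_smul_seqDirSubdiff_sign_mul (c : ℝ) :
    |c| • seqDirSubdiff (fun y => Real.sign c * φ y) x d =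
      seqDirSubdiff (fun y => c * φ y) x d := by
  rcases eq_or_ne c 0 with rfl | hc
  · simp [seqDirSubdiff_zero]
  · simp only [← seqDirSubdiff_const_mul (abs_pos.mpr hc), ← mul_assoc, abs_mul_real_sign]

theorem add_seqDirSubdiff_subset [FiniteDimensional ℝ H] {t : Set H} {g' : H →L[ℝ] ℝ}
    (ht : t ∈ 𝓝 x) (hf : LowerSemicontinuousOn f t) (hg : HasStrictFDerivAt g g' x) :
    seqDirSubdiff f x d + seqDirSubdiff g x d ⊆ seqDirSubdiff (fun y => f y + g y) x d := by
  rintro _ ⟨a, ha, b, hb, rfl⟩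
  obtain ⟨L, s, hs, hL⟩ := hg.exists_lipschitzOnWith
  have hfg : LowerSemicontinuousOn (fun y => f y + g y) (t ∩ s) :=
    (hf.mono inter_subset_left).add
      (hL.continuousOn.mono inter_subset_right).lowerSemicontinuousOn
  have ha' : a ∈ seqDirSubdiff (fun y => f y + g y + -g y) x d := by simpa using ha
  obtain ⟨p, hp, q, hq, rfl⟩ :=
    seqDirSubdiff_add_subset (inter_mem ht hs) hfg (hL.neg.mono inter_subset_right) ha'
  have hqb : q + b = 0 := by
    rw [← innerSL_inj (𝕜 := ℝ), map_add, innerSL_eq_of_mem_seqDirSubdiff hg.fun_neg hq,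
      innerSL_eq_of_mem_seqDirSubdiff hg hb, neg_add_cancel, map_zero]
  simpa [add_assoc, hqb] using hp

theorem seqDirSubdiff_sum_subset [FiniteDimensional ℝ H] {ι : Type*} {φ : ι → H → ℝ} {t : Set H}
    {K : ι → NNReal} (ht : t ∈ 𝓝 x) (hφ : ∀ i, LipschitzOnWith (K i) (φ i) t) (s : Finset ι) :
    seqDirSubdiff (fun y => ∑ i ∈ s, φ i y) x d ⊆ ∑ i ∈ s, seqDirSubdiff (φ i) x d := by
  induction s using Finset.cons_induction with
  | empty => simp [seqDirSubdiff_zero]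
  | cons a s ha ih =>
    simp only [Finset.sum_cons, add_comm (φ a _), add_comm (seqDirSubdiff (φ a) x d)]
    refine (seqDirSubdiff_add_subset ht ?_ (hφ a)).trans (add_subset_add_right ih)
    exact lowerSemicontinuousOn_sum fun i _ => (hφ i).continuousOn.lowerSemicontinuousOn

theorem sum_seqDirSubdiff_subset [FiniteDimensional ℝ H] {ι : Type*} {φ : ι → H → ℝ} {t : Set H}
    {I : Set ι} (ht : t ∈ 𝓝 x) (hφ : ∀ i, LowerSemicontinuousOn (φ i) t) (hI : I.Subsingleton)
    (hstrict : ∀ i ∉ I, ∃ g : H →L[ℝ] ℝ, HasStrictFDerivAt (φ i) g x) (s : Finset ι) :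
    ∑ i ∈ s, seqDirSubdiff (φ i) x d ⊆ seqDirSubdiff (fun y => ∑ i ∈ s, φ i y) x d := by
  induction s using Finset.cons_induction with
  | empty => simp [seqDirSubdiff_zero]
  | cons a s ha ih =>
    simp only [Finset.sum_cons]
    refine (add_subset_add_left ih).trans ?_
    by_cases haI : a ∈ I
    · choose! g hg using hstrict
      have hsI (i : ι) (hi : i ∈ s) : i ∉ I := fun hiI => ha (hI haI hiI ▸ hi)
      exact add_seqDirSubdiff_subset ht (hφ a) (.fun_sum fun i hi => hg i (hsI i hi))
    · obtain ⟨g, hg⟩ := hstrict a haI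
      simp only [add_comm (φ a _), add_comm (seqDirSubdiff (φ a) x d)]
      exact add_seqDirSubdiff_subset ht (lowerSemicontinuousOn_sum fun i _ => hφ i) hg

end DirectionalSubdifferential

section Scalarization

variable {H ι : Type*} [NormedAddCommGroup H] [InnerProductSpace ℝ H] [FiniteDimensional ℝ H]
  [Fintype ι] {F : H → EuclideanSpace ℝ ι} {x d : H} {v : EuclideanSpace ℝ ι} {t : Set H}
  {K : NNReal}

theorem dirLimSubdiff_inner_eq_seqDirSubdiff_sum (ht : t ∈ 𝓝 x) (hF : LipschitzOnWith K F t)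
    (hv : Tendsto (fun τ : ℝ => τ⁻¹ • (F (x + τ • d) - F x)) (𝓝[>] 0) (𝓝 v))
    (lam : EuclideanSpace ℝ ι) :
    dirLimSubdiff (fun y => ⟪lam, F y⟫) x d ⟪lam, v⟫ =
      seqDirSubdiff (fun y => ∑ i, lam i * F y i) x d := by
  simpa [PiLp.inner_apply, mul_comm] using
    dirLimSubdiff_clm_comp_eq_seqDirSubdiff ht hF hv (innerSL ℝ lam)

theorem abs_smul_dirLimSubdiff_sign_mul (ht : t ∈ 𝓝 x) (hF : LipschitzOnWith K F t)
    (hv : Tendsto (fun τ : ℝ => τ⁻¹ • (F (x + τ • d) - F x)) (𝓝[>] 0) (𝓝 v)) (c : ℝ) (i : ι) :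
    |c| • dirLimSubdiff (fun y => Real.sign c * F y i) x d (Real.sign c * v i) =
      seqDirSubdiff (fun y => c * F y i) x d := by
  rw [← abs_smul_seqDirSubdiff_sign_mul]
  congr 1
  exact dirLimSubdiff_clm_comp_eq_seqDirSubdiff ht hF hv
    (Real.sign c • EuclideanSpace.proj (𝕜 := ℝ) i)

theorem stmt1_general (ht : t ∈ 𝓝 x) (hF : LipschitzOnWith K F t)
    (hv : Tendsto (fun τ : ℝ => τ⁻¹ • (F (x + τ • d) - F x)) (𝓝[>] 0) (𝓝 v))
    (lam : EuclideanSpace ℝ ι) :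
    dirLimSubdiff (fun y => ⟪lam, F y⟫) x d ⟪lam, v⟫ ⊆
        ∑ i, |lam i| • dirLimSubdiff (fun y => Real.sign (lam i) * F y i) x d
          (Real.sign (lam i) * v i) ∧
      ((∃ I : Set ι, I.Subsingleton ∧
          ∀ i ∉ I, ∃ g : H →L[ℝ] ℝ, HasStrictFDerivAt (fun y => F y i) g x) →
        dirLimSubdiff (fun y => ⟪lam, F y⟫) x d ⟪lam, v⟫ =
          ∑ i, |lam i| • dirLimSubdiff (fun y => Real.sign (lam i) * F y i) x d
            (Real.sign (lam i) * v i)) := by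
  simp only [dirLimSubdiff_inner_eq_seqDirSubdiff_sum ht hF hv,
    abs_smul_dirLimSubdiff_sign_mul ht hF hv]
  have hcomp (i : ι) :=
    (lam i • EuclideanSpace.proj (𝕜 := ℝ) i).lipschitz.comp_lipschitzOnWith hF
  have hsubset := seqDirSubdiff_sum_subset (d := d) ht hcomp Finset.univ
  refine ⟨hsubset, fun ⟨I, hI, hstrict⟩ => hsubset.antisymm ?_⟩
  refine sum_seqDirSubdiff_subset ht (fun i => (hcomp i).continuousOn.lowerSemicontinuousOn) hI
    (fun i hi => ?_) Finset.univ
  obtain ⟨g, hg⟩ := hstrict i hi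
  exact ⟨lam i • g, hg.const_mul (lam i)⟩

end Scalarization

theorem dirSumSet_eq_sum {n l : ℕ} (F : Eu n → Eu l) (F' : Eu n → Eu n → Eu l) (lam : Eu l)
    (x d : Eu n) :
    dirSumSet F F' lam x d =
      ∑ i, |lam i| • dirLimSubdiff (fun y => Real.sign (lam i) * F y i) x d
        (Real.sign (lam i) * F' x d i) := by
  ext v
  simp only [dirSumSet, mem_ofPred_eq, mem_fintype_sum, eq_comm, exists_prop]

/-- Scaled sum rule for the directional limiting subdifferential, with equality in case
all but at most one component function of `F` are continuously differentiable at `x`. -/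
theorem stmt1 {n l : ℕ}
    (F : Eu n → Eu l) (F' : Eu n → Eu n → Eu l)
    (hLip : LocallyLipschitz F) (hF' : IsDirDeriv F F')
    (x d : Eu n) (lam : Eu l) :
    scalDirSubdiff F F' lam x d ⊆ dirSumSet F F' lam x d ∧
    ((∃ I : Set (Fin l), I.Subsingleton ∧
        ∀ i ∉ I, ContDiffAt ℝ 1 (fun y => F y i) x) →
      scalDirSubdiff F F' lam x d = dirSumSet F F' lam x d) := by
  obtain ⟨K, t, ht, hK⟩ := hLip x
  obtain ⟨hsubset, heq⟩ := stmt1_general ht hK (hF' x d) lam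
  rw [dirSumSet_eq_sum]
  exact ⟨hsubset, fun ⟨I, hI, hC1⟩ =>
    heq ⟨I, hI, fun i hi => ⟨_, (hC1 i hi).hasStrictFDerivAt one_ne_zero⟩⟩⟩

end
end

section
/- Let x̄ be feasible for (P), let d ∈ T^lin_{F,Γ}(x̄), and let MSCQ(d) hold at x̄. Then d ∈ T_X(x̄) and N_X(x̄; d) ⊂ ∪_{λ ∈ N_Γ(F(x̄); F'(x̄; d))} ∂⟨λ, F⟩(x̄; d). -/
open Filter Topology Metric Set
open scoped RealInnerProductSpace Pointwise

noncomputable section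

/-!
A regular normal `η` to `F ⁻¹' Γ` at `p` satisfies
`⟪η, y - p⟫ ≤ o(‖y - p‖) + ‖η‖ dist(y, F ⁻¹' Γ)`, and near `x` in direction `d` subregularity
replaces the last distance by `κ dist(F y, Γ)`: the constraint has become a penalty term. Smoothing
the penalty to `m / 2 * dist(F y, Γ) ^ 2` and minimizing, the residual `m • (F y - v)`, with `v` a
projection of `F y` onto `Γ`, is a regular normal to `Γ` at `v`, has norm at most `2 κ ‖η‖`, and is
a multiplier for which `η` is an approximate subgradient of the scalarization. Along points
approaching `x` in direction `d` these multipliers are bounded, so they have a cluster point; since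
`F` is directionally differentiable and Lipschitz near `x`, the corresponding points of the graph of
`F` approach `(x, F x)` in direction `(d, F' x d)`.
-/

theorem inv_smul_sub_sub {𝕜 E : Type*} [DivisionRing 𝕜] [AddCommGroup E] [Module 𝕜 E] {t : 𝕜}
    (ht : t ≠ 0) (a b c : E) : t⁻¹ • (a - b) - c = t⁻¹ • (a - (b + t • c)) := by
  rw [sub_add_eq_sub_sub, smul_sub t⁻¹ (a - b), inv_smul_smul₀ ht]

section DirectionalNeighborhoods

/-- The filter of neighborhoods of `x` in direction `d`: it is generated by the sets
`{x + t • w | 0 < t < ε, w ∈ U}` with `U` a neighborhood of `d`. "There are `d_k → d` and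
`t_k ↓ 0` such that `x + t_k d_k` satisfies `P`" is `∃ᶠ y in dirNhds x d, P y`. -/
def dirNhds {E : Type*} [AddCommGroup E] [Module ℝ E] [TopologicalSpace E] (x d : E) : Filter E :=
  map (fun p : ℝ × E => x + p.1 • p.2) (𝓝[>] 0 ×ˢ 𝓝 d)

section TopologicalVectorSpace

variable {ι E E' : Type*} [AddCommGroup E] [Module ℝ E] [TopologicalSpace E]
  [AddCommGroup E'] [Module ℝ E'] [TopologicalSpace E'] {x d : E} {P : E → Prop}

theorem tendsto_dirNhds {l : Filter ι} {t : ι → ℝ} {y : ι → E} (ht : Tendsto t l (𝓝[>] 0))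
    (hy : Tendsto (fun i => (t i)⁻¹ • (y i - x)) l (𝓝 d)) : Tendsto y l (dirNhds x d) := by
  refine (tendsto_map.comp (ht.prodMk hy)).congr' ?_
  filter_upwards [ht self_mem_nhdsWithin] with i (hi : 0 < t i)
  simp [smul_inv_smul₀ hi.ne']

theorem tendsto_continuousLinearMap_dirNhds (A : E →L[ℝ] E') (x d : E) :
    Tendsto A (dirNhds x d) (dirNhds (A x) (A d)) := by
  have hA : Tendsto (fun p : ℝ × E => (p.1, A p.2)) (𝓝[>] 0 ×ˢ 𝓝 d) (𝓝[>] 0 ×ˢ 𝓝 (A d)) :=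
    tendsto_id.prodMap A.continuous.continuousAt
  refine tendsto_map'_iff.2 ((tendsto_map.comp hA).congr fun p => ?_)
  simp

variable [IsTopologicalAddGroup E] [ContinuousSMul ℝ E]

theorem dirNhds_le_nhds (x d : E) : dirNhds x d ≤ 𝓝 x := by
  have h : Tendsto (fun p : ℝ × E => x + p.1 • p.2) (𝓝 0 ×ˢ 𝓝 d) (𝓝 (x + (0 : ℝ) • d)) :=
    tendsto_const_nhds.add (tendsto_fst.smul tendsto_snd)
  rw [zero_smul, add_zero] at h
  exact h.mono_left (prod_mono_left _ nhdsWithin_le_nhds)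

theorem eventually_eventually_nhds_of_dirNhds (h : ∀ᶠ y in dirNhds x d, P y) :
    ∀ᶠ y in dirNhds x d, ∀ᶠ z in 𝓝 y, P z := by
  obtain ⟨p, hp, q, hq, hpq⟩ := eventually_prod_iff.1 (eventually_map.1 h)
  rw [dirNhds, eventually_map]
  filter_upwards [prod_mem_prod (hp.and self_mem_nhdsWithin) (eventually_eventually_nhds.2 hq)]
    with ⟨t, w⟩ ⟨⟨ht, (htpos : 0 < t)⟩, hw⟩
  have ht0 : t ≠ 0 := htpos.ne'
  have hcont : Tendsto (fun z => t⁻¹ • (z - x)) (𝓝 (x + t • w)) (𝓝 w) := by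
    refine Continuous.tendsto' (by fun_prop) _ _ ?_
    rw [add_sub_cancel_left, inv_smul_smul₀ ht0]
  filter_upwards [hcont hw] with z hz
  simpa [smul_inv_smul₀ ht0] using hpq ht hz

theorem frequently_dirNhds_of_frequently_nhds (h : ∃ᶠ y in dirNhds x d, ∃ᶠ z in 𝓝 y, P z) :
    ∃ᶠ z in dirNhds x d, P z := fun hP =>
  h ((eventually_eventually_nhds_of_dirNhds hP).mono fun _ => not_not_intro)

end TopologicalVectorSpace

section Normed

variable {E G : Type*} [NormedAddCommGroup E] [NormedSpace ℝ E] [NormedAddCommGroup G]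
  [NormedSpace ℝ G] {F : E → G} {s : Set E} {K : NNReal} {x d : E} {v : G}

theorem tendsto_slope_nhds_of_lipschitzOnWith (hs : s ∈ 𝓝 x) (hF : LipschitzOnWith K F s)
    (hv : Tendsto (fun t : ℝ => t⁻¹ • (F (x + t • d) - F x)) (𝓝[>] 0) (𝓝 v)) :
    Tendsto (fun p : ℝ × E => p.1⁻¹ • (F (x + p.1 • p.2) - F x)) (𝓝[>] 0 ×ˢ 𝓝 d) (𝓝 v) := by
  have hfix : Tendsto (fun p : ℝ × E => x + p.1 • d) (𝓝[>] 0 ×ˢ 𝓝 d) (𝓝 x) :=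
    (tendsto_map.comp (tendsto_id.prodMap tendsto_const_nhds)).mono_right (dirNhds_le_nhds x d)
  have hvar : Tendsto (fun p : ℝ × E => x + p.1 • p.2) (𝓝[>] 0 ×ˢ 𝓝 d) (𝓝 x) :=
    dirNhds_le_nhds x d
  have hsnd : Tendsto (fun p : ℝ × E => K * ‖p.2 - d‖) (𝓝[>] 0 ×ˢ 𝓝 d) (𝓝 0) := by
    have hcont : Tendsto (fun w : E => K * ‖w - d‖) (𝓝 d) (𝓝 0) :=
      Continuous.tendsto' (by fun_prop) _ _ (by simp)
    exact hcont.comp tendsto_snd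
  have hdiff : Tendsto (fun p : ℝ × E => p.1⁻¹ • (F (x + p.1 • p.2) - F (x + p.1 • d)))
      (𝓝[>] 0 ×ˢ 𝓝 d) (𝓝 0) := by
    refine squeeze_zero_norm' ?_ hsnd
    filter_upwards [hfix hs, hvar hs, tendsto_fst self_mem_nhdsWithin]
      with p hfix hvar (ht : 0 < p.1)
    have hlip := hF.norm_sub_le hvar hfix
    rw [add_sub_add_left_eq_sub, ← smul_sub, norm_smul, Real.norm_of_nonneg ht.le] at hlip
    rw [norm_smul, norm_inv, Real.norm_of_nonneg ht.le, inv_mul_le_iff₀ ht]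
    linarith
  simpa [← smul_add] using hdiff.add (hv.comp tendsto_fst)

theorem tendsto_graph_dirNhds (hs : s ∈ 𝓝 x) (hF : LipschitzOnWith K F s)
    (hv : Tendsto (fun t : ℝ => t⁻¹ • (F (x + t • d) - F x)) (𝓝[>] 0) (𝓝 v)) :
    Tendsto (fun y => (y, F y)) (dirNhds x d) (dirNhds (x, F x) (d, v)) := by
  refine tendsto_map'_iff.2 (tendsto_dirNhds tendsto_fst ?_)
  refine Tendsto.congr' ?_
    (tendsto_snd.prodMk_nhds (tendsto_slope_nhds_of_lipschitzOnWith hs hF hv))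
  filter_upwards [tendsto_fst self_mem_nhdsWithin] with p (ht : 0 < p.1)
  simp [inv_smul_smul₀ ht.ne']

theorem tendsto_norm_normalize_nhdsNE (x : E) :
    Tendsto (fun y => (‖y - x‖, ‖y - x‖⁻¹ • (y - x))) (𝓝[≠] x)
      (𝓝[>] 0 ×ˢ 𝓟 (sphere (0 : E) 1)) := by
  have hpos : ∀ᶠ y in 𝓝[≠] x, 0 < ‖y - x‖ :=
    eventually_mem_nhdsWithin.mono fun y hy => norm_pos_iff.2 (sub_ne_zero.2 hy)
  refine Tendsto.prodMk (tendsto_nhdsWithin_iff.2 ⟨?_, hpos⟩) (tendsto_principal.2 ?_)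
  · exact (tendsto_norm_sub_self x).mono_left nhdsWithin_le_nhds
  · filter_upwards [hpos] with y hy
    rw [mem_sphere_zero_iff_norm, norm_smul, norm_inv, norm_norm, inv_mul_cancel₀ hy.ne']

end Normed

end DirectionalNeighborhoods

section Frequently

variable {α β : Type*} {l : Filter α}

theorem exists_frequently_prod_nhds_of_isCompact [TopologicalSpace β] {k : Set β} (hk : IsCompact k)
    {P : α × β → Prop} (h : ∃ᶠ p in l ×ˢ 𝓟 k, P p) : ∃ b ∈ k, ∃ᶠ p in l ×ˢ 𝓝 b, P p := by
  by_contra! hP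
  have hev : ∀ᶠ p in l ×ˢ 𝓝ˢ k, ¬P p := hk.mem_prod_nhdsSet_of_forall hP
  exact h (hev.filter_mono (prod_mono_right l principal_le_nhdsSet))

theorem exists_forall_frequently_prod_nhds_of_isCompact [TopologicalSpace β] {k : Set β}
    (hk : IsCompact k) {P : ℝ → α × β → Prop} (hmono : ∀ ε δ, ε ≤ δ → ∀ p, P ε p → P δ p)
    (h : ∀ ε > 0, ∃ᶠ p in l ×ˢ 𝓟 k, P ε p) : ∃ b ∈ k, ∀ ε > 0, ∃ᶠ p in l ×ˢ 𝓝 b, P ε p := by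
  have hjoint : ∃ᶠ q in (𝓝[>] (0 : ℝ) ×ˢ l) ×ˢ 𝓟 k, P q.1.1 (q.1.2, q.2) := fun hP => by
    have hcurry : ∀ᶠ ε in 𝓝[>] (0 : ℝ), ∀ᶠ p in l ×ˢ 𝓟 k, ¬P ε p :=
      (tendsto_prodAssoc_symm.eventually hP).curry
    obtain ⟨ε, hε, hpos⟩ := (hcurry.and self_mem_nhdsWithin).exists
    exact h ε hpos hε
  obtain ⟨b, hb, hfreq⟩ := exists_frequently_prod_nhds_of_isCompact hk hjoint
  refine ⟨b, hb, fun ε hε => ?_⟩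
  have hproj : Tendsto (fun q : (ℝ × α) × β => (q.1.2, q.2)) ((𝓝[>] 0 ×ˢ l) ×ˢ 𝓝 b)
      (l ×ˢ 𝓝 b) := tendsto_snd.prodMap tendsto_id
  refine hproj.frequently ((hfreq.and_eventually ((tendsto_fst.comp tendsto_fst).eventually
    (Ioc_mem_nhdsGT hε))).mono ?_)
  rintro q ⟨hq, hqε⟩
  exact hmono _ _ hqε.2 _ hq

theorem frequently_prod_nhds_of_forall_closedBall [PseudoMetricSpace β] {b : β} {P : α × β → Prop}
    (h : ∀ ε > 0, ∃ᶠ a in l, ∃ c ∈ closedBall b ε, P (a, c)) : ∃ᶠ p in l ×ˢ 𝓝 b, P p := by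
  intro hP
  obtain ⟨p, hp, q, hq, hpq⟩ := eventually_prod_iff.1 hP
  obtain ⟨ε, hε, hqε⟩ := nhds_basis_closedBall.eventually_iff.1 hq
  obtain ⟨a, ⟨c, hc, hac⟩, ha⟩ := ((h ε hε).and_eventually hp).exists
  exact hpq ha (hqε hc) hac

end Frequently

section Penalization

theorem exists_nearestPoint_tendsto_nhds {X : Type*} [PseudoMetricSpace X] [ProperSpace X]
    {Ω : Set X} (hΩ : IsClosed Ω) (hne : Ω.Nonempty) :
    ∃ π : X → X, (∀ y, π y ∈ Ω) ∧ (∀ y, infDist y Ω = dist y (π y)) ∧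
      ∀ x ∈ Ω, (∀ y, dist (π y) x ≤ 2 * dist y x) ∧ Tendsto π (𝓝 x) (𝓝 x) := by
  choose π hπ hdist using hΩ.exists_infDist_eq_dist hne
  refine ⟨π, hπ, hdist, fun x hx => ?_⟩
  have hle : ∀ y, dist (π y) x ≤ 2 * dist y x := fun y => by
    linarith [dist_triangle_left (π y) x y, infDist_le_dist_of_mem hx (x := y), hdist y]
  exact ⟨hle, tendsto_iff_dist_tendsto_zero.2 <| squeeze_zero (fun _ => dist_nonneg) hle <|
    Continuous.tendsto' (by fun_prop) _ _ (by simp)⟩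

/- Completing the square, `‖G y' - c‖² = ‖G y - c‖² + 2⟪G y - c, G y' - G y⟫ + ‖G y' - G y‖²`, and
the last term is `o(‖y' - y‖)`. -/
theorem eventually_sub_le_inner_of_isMinFilter {E Y : Type*} [NormedAddCommGroup E]
    [NormedAddCommGroup Y] [InnerProductSpace ℝ Y] {g : E → ℝ} {G : E → Y} {c : Y} {m ε : ℝ}
    {s : Set E} {K : NNReal} {y : E} {l : Filter E} (hl : l ≤ 𝓝 y) (hs : s ∈ 𝓝 y)
    (hG : LipschitzOnWith K G s) (hmin : IsMinFilter (fun y' => g y' + m / 2 * ‖G y' - c‖ ^ 2) l y)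
    (hε : 0 < ε) : ∀ᶠ y' in l, g y - g y' ≤ ⟪m • (G y - c), G y' - G y⟫ + ε * ‖y' - y‖ := by
  have hsmall : ∀ᶠ y' in 𝓝 y, |m| / 2 * K ^ 2 * ‖y' - y‖ ≤ ε :=
    (Continuous.tendsto' (by fun_prop) y 0 (by simp)).eventually_le_const hε
  filter_upwards [hmin, hl hs, hl hsmall] with y' hle hy' hsmall
  have hsquare : ‖G y' - c‖ ^ 2 =
      ‖G y - c‖ ^ 2 + 2 * ⟪G y - c, G y' - G y⟫ + ‖G y' - G y‖ ^ 2 := by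
    rw [← norm_add_sq_real, add_comm, sub_add_sub_cancel]
  have hrem : m / 2 * ‖G y' - G y‖ ^ 2 ≤ ε * ‖y' - y‖ := calc
    m / 2 * ‖G y' - G y‖ ^ 2 ≤ |m| / 2 * (K * ‖y' - y‖) ^ 2 := by
      gcongr
      · exact le_abs_self m
      · exact hG.norm_sub_le hy' (mem_of_mem_nhds hs)
    _ = |m| / 2 * K ^ 2 * ‖y' - y‖ * ‖y' - y‖ := by ring
    _ ≤ ε * ‖y' - y‖ := by gcongr
  rw [hsquare] at hle
  rw [real_inner_smul_left]
  linarith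

/- At a minimizer `z` of the penalized function over a small ball, comparison with `p` gives
`c * dist z p + m / 2 * b z ^ 2 ≤ L * b z`; hence `m * b z ≤ 2 * L` and
`c * dist z p ≤ 2 * L ^ 2 / m`, so that `z` is in the interior of the ball once `m` is large. -/
theorem frequently_isLocalMin_add_penalty {X : Type*} [PseudoMetricSpace X] [ProperSpace X]
    {h b : X → ℝ} {p : X} {c L : ℝ} (hh : Continuous h) (hb : Continuous b)
    (hb_nonneg : ∀ y, 0 ≤ b y) (hbp : b p = 0) (hc : 0 < c) (hL : 0 ≤ L)
    (hle : ∀ᶠ y in 𝓝 p, c * dist y p ≤ h y - h p + L * b y) :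
    ∃ᶠ z in 𝓝 p, ∃ m > 0, m * b z ≤ 2 * L ∧ IsLocalMin (fun y => h y + m / 2 * b y ^ 2) z := by
  intro hcon
  obtain ⟨r, hr, hball⟩ := nhds_basis_closedBall.eventually_iff.1 (hle.and hcon)
  set m : ℝ := 2 * L ^ 2 / (c * r) + 1
  have hm : 0 < m := by positivity
  obtain ⟨z, hz, hmin⟩ := (isCompact_closedBall p r).exists_isMinOn
    ⟨p, mem_closedBall_self hr.le⟩ (f := fun y => h y + m / 2 * b y ^ 2) (by fun_prop)
  obtain ⟨hgrowth, hnot⟩ := hball hz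
  have hcompare : h z + m / 2 * b z ^ 2 ≤ h p := by
    simpa [hbp] using hmin (mem_closedBall_self hr.le)
  have hcz : 0 ≤ c * dist z p := by positivity
  have hmb : m * b z ≤ 2 * L := by
    rcases (hb_nonneg z).eq_or_lt with hbz | hbz
    · simpa [← hbz] using hL
    · refine le_of_mul_le_mul_right ?_ hbz
      linarith
  have hnear : z ∈ ball p r := by
    have hmcr : 2 * L ^ 2 < m * (c * r) := by
      rw [add_mul, div_mul_cancel₀ _ (by positivity)]
      linarith [mul_pos hc hr]
    have hmcz : m * (c * dist z p) ≤ 2 * L ^ 2 := by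
      have hsq : 0 ≤ m / 2 * b z ^ 2 := by positivity
      calc m * (c * dist z p) ≤ m * (L * b z) :=
            mul_le_mul_of_nonneg_left (by linarith) hm.le
        _ = L * (m * b z) := by ring
        _ ≤ L * (2 * L) := by gcongr
        _ = 2 * L ^ 2 := by ring
    have hlt := lt_of_mul_lt_mul_left (hmcz.trans_lt hmcr) hm.le
    exact mem_ball.2 (lt_of_mul_lt_mul_left hlt hc.le)
  exact hnot ⟨m, hm, hmb, hmin.isLocalMin (closedBall_mem_nhds_of_mem hnear)⟩

end Penalization

section Normals

variable {H : Type*} [NormedAddCommGroup H] [InnerProductSpace ℝ H] {Ω : Set H} {x d η : H}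

theorem mem_tanCone_iff : d ∈ tanCone Ω x ↔ x ∈ Ω ∧ ∃ᶠ y in dirNhds x d, y ∈ Ω := by
  refine and_congr_right fun _ => ⟨?_, fun h => ?_⟩
  · rintro ⟨dk, tk, hd, htpos, ht, hmem⟩
    have ht' := tendsto_nhdsWithin_iff.2 ⟨ht, .of_forall htpos⟩
    exact (tendsto_map.comp (ht'.prodMk hd)).frequently (.of_forall hmem)
  · obtain ⟨p, hp, hmem⟩ := exists_seq_forall_of_frequently
      ((frequently_map.1 h).and_eventually (tendsto_fst self_mem_nhdsWithin))
    exact ⟨fun k => (p k).2, fun k => (p k).1, tendsto_snd.comp hp, fun k => (hmem k).2,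
      tendsto_nhds_of_tendsto_nhdsWithin (tendsto_fst.comp hp), fun k => (hmem k).1⟩

theorem mem_dirLimNormal_iff : η ∈ dirLimNormal Ω x d ↔
    x ∈ Ω ∧ ∃ᶠ p in dirNhds x d ×ˢ 𝓝 η, p.2 ∈ regNormal Ω p.1 := by
  have hmap : dirNhds x d ×ˢ 𝓝 η = map (fun q : (ℝ × H) × H => (x + q.1.1 • q.1.2, q.2))
      ((𝓝[>] 0 ×ˢ 𝓝 d) ×ˢ 𝓝 η) := by
    rw [dirNhds, prod_map_left]
    rfl
  rw [hmap, frequently_map]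
  refine and_congr_right fun _ => ⟨?_, fun h => ?_⟩
  · rintro ⟨dk, tk, ηk, hd, htpos, ht, hη, hmem⟩
    have ht' := tendsto_nhdsWithin_iff.2 ⟨ht, .of_forall htpos⟩
    exact ((ht'.prodMk hd).prodMk hη).frequently (.of_forall hmem)
  · obtain ⟨q, hq, hmem⟩ := exists_seq_forall_of_frequently
      (h.and_eventually ((tendsto_fst.comp tendsto_fst) self_mem_nhdsWithin))
    exact ⟨fun k => (q k).1.2, fun k => (q k).1.1, fun k => (q k).2,
      (tendsto_snd.comp tendsto_fst).comp hq, fun k => (hmem k).2,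
      tendsto_nhds_of_tendsto_nhdsWithin ((tendsto_fst.comp tendsto_fst).comp hq),
      tendsto_snd.comp hq, fun k => (hmem k).1⟩

theorem mem_regNormal_of_forall_eventually_inner_le (hx : x ∈ Ω)
    (h : ∀ ε > 0, ∀ᶠ y in 𝓝[Ω] x, ⟪η, y - x⟫ ≤ ε * ‖y - x‖) : η ∈ regNormal Ω x := by
  refine ⟨hx, fun d hd => ?_⟩
  have hle : ∀ ε > 0, ⟪η, d⟫ - ε * ‖d‖ ≤ 0 := by
    intro ε hε
    have hlim : Tendsto (fun p : ℝ × H => ⟪η, p.2⟫ - ε * ‖p.2‖) (𝓝[>] 0 ×ˢ 𝓝 d)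
        (𝓝 (⟪η, d⟫ - ε * ‖d‖)) :=
      (by fun_prop : Continuous fun w : H => ⟪η, w⟫ - ε * ‖w‖).continuousAt.tendsto.comp
        tendsto_snd
    have hev : ∀ᶠ y in dirNhds x d, y ∈ Ω → ⟪η, y - x⟫ ≤ ε * ‖y - x‖ :=
      dirNhds_le_nhds x d (eventually_nhdsWithin_iff.1 (h ε hε))
    refine le_of_tendsto_of_frequently hlim ?_
    refine ((frequently_map.1 ((mem_tanCone_iff.1 hd).2.and_eventually hev)).and_eventually
      (tendsto_fst self_mem_nhdsWithin)).mono ?_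
    rintro p ⟨⟨hp, hpη⟩, (ht : 0 < p.1)⟩
    have hscaled := hpη hp
    rw [add_sub_cancel_left, inner_smul_right, norm_smul, Real.norm_of_nonneg ht.le,
      mul_left_comm] at hscaled
    exact sub_nonpos.2 (le_of_mul_le_mul_left hscaled ht)
  have hzero : Tendsto (fun ε : ℝ => ⟪η, d⟫ - ε * ‖d‖) (𝓝[>] 0) (𝓝 ⟪d, η⟫) :=
    (Continuous.tendsto' (by fun_prop) _ _ (by simp [real_inner_comm])).mono_left
      nhdsWithin_le_nhds
  exact le_of_tendsto hzero (eventually_mem_nhdsWithin.mono hle)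

theorem smul_sub_mem_regNormal_of_infDist_eq_dist {u v : H} (hv : v ∈ Ω)
    (hdist : infDist u Ω = dist u v) {m : ℝ} (hm : 0 ≤ m) : m • (u - v) ∈ regNormal Ω v := by
  refine mem_regNormal_of_forall_eventually_inner_le hv fun ε hε => ?_
  have hmin : IsMinOn (fun y => (0 : ℝ) + m / 2 * ‖id y - u‖ ^ 2) Ω v := fun y hy => by
    have hle : dist v u ≤ dist y u := by
      rw [dist_comm v, dist_comm y, ← hdist]
      exact infDist_le_dist_of_mem hy
    simp only [id, ← dist_eq_norm, mem_ofPred_eq]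
    gcongr
  filter_upwards [eventually_sub_le_inner_of_isMinFilter nhdsWithin_le_nhds univ_mem
    LipschitzWith.id.lipschitzOnWith hmin.localize hε] with y hy
  rw [id, id, sub_self, ← neg_sub u v, smul_neg, inner_neg_left] at hy
  linarith

theorem eventually_inner_le_of_mem_regNormal [ProperSpace H] (hη : η ∈ regNormal Ω x) {ε : ℝ}
    (hε : 0 < ε) : ∀ᶠ y in 𝓝[Ω] x, ⟪η, y - x⟫ ≤ ε * ‖y - x‖ := by
  by_contra hcon
  have hfreq : ∃ᶠ y in 𝓝[≠] x, y ∈ Ω ∧ ε * ‖y - x‖ < ⟪η, y - x⟫ := by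
    rw [not_eventually, frequently_nhdsWithin_iff] at hcon
    refine frequently_nhdsWithin_iff.2 (hcon.mono ?_)
    rintro y ⟨hlt, hy⟩
    refine ⟨⟨hy, not_le.1 hlt⟩, ?_⟩
    rintro rfl
    simp at hlt
  have hsphere : ∃ᶠ p in 𝓝[>] (0 : ℝ) ×ˢ 𝓟 (sphere (0 : H) 1),
      x + p.1 • p.2 ∈ Ω ∧ ε ≤ ⟪η, p.2⟫ := by
    refine (tendsto_norm_normalize_nhdsNE x).frequently
      ((hfreq.and_eventually self_mem_nhdsWithin).mono ?_)
    rintro y ⟨⟨hy, hlt⟩, hne⟩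
    have hpos : 0 < ‖y - x‖ := norm_pos_iff.2 (sub_ne_zero.2 hne)
    rw [smul_inv_smul₀ hpos.ne', add_sub_cancel, inner_smul_right, inv_mul_eq_div,
      le_div_iff₀ hpos]
    exact ⟨hy, hlt.le⟩
  obtain ⟨w, -, hw⟩ := exists_frequently_prod_nhds_of_isCompact (isCompact_sphere 0 1) hsphere
  have htan : w ∈ tanCone Ω x :=
    mem_tanCone_iff.2 ⟨hη.1, frequently_map.2 (hw.mono fun _ => And.left)⟩
  have hlim : Tendsto (fun p : ℝ × H => ⟪η, p.2⟫) (𝓝[>] 0 ×ˢ 𝓝 w) (𝓝 ⟪w, η⟫) := by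
    rw [real_inner_comm]
    exact tendsto_const_nhds.inner tendsto_snd
  exact (hε.trans_le (ge_of_tendsto_of_frequently hlim (hw.mono fun _ => And.right))).not_ge
    (hη.2 w htan)

theorem eventually_inner_le_infDist_of_mem_regNormal [ProperSpace H] (hΩ : IsClosed Ω)
    (hη : η ∈ regNormal Ω x) {ε : ℝ} (hε : 0 < ε) :
    ∀ᶠ y in 𝓝 x, ⟪η, y - x⟫ ≤ ε * ‖y - x‖ + ‖η‖ * infDist y Ω := by
  obtain ⟨π, hπ, hdist, hnear⟩ := exists_nearestPoint_tendsto_nhds hΩ ⟨x, hη.1⟩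
  obtain ⟨hπx_le, hπx⟩ := hnear x hη.1
  have hlim : Tendsto π (𝓝 x) (𝓝[Ω] x) := tendsto_nhdsWithin_iff.2 ⟨hπx, .of_forall hπ⟩
  filter_upwards [hlim.eventually (eventually_inner_le_of_mem_regNormal hη (half_pos hε))]
    with y hy
  calc ⟪η, y - x⟫ = ⟪η, π y - x⟫ + ⟪η, y - π y⟫ := by
        rw [← inner_add_right, add_comm, sub_add_sub_cancel]
    _ ≤ ε / 2 * (2 * ‖y - x‖) + ‖η‖ * ‖y - π y‖ := by
        gcongr
        · exact hy.trans (by gcongr; simpa only [dist_eq_norm] using hπx_le y)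
        · exact real_inner_le_norm _ _
    _ = ε * ‖y - x‖ + ‖η‖ * infDist y Ω := by
        rw [hdist, dist_eq_norm]
        ring

end Normals

section ApproxSubgradients

variable {H : Type*} [NormedAddCommGroup H] [InnerProductSpace ℝ H]

/-- `ξ` is an analytic `ε`-subgradient of `φ` at `y`: up to the error `ε * ‖y' - y‖`, the affine
function with slope `ξ` touching `φ` at `y` is locally below `φ`. The Fréchet subgradients are the
`ξ` for which this holds for all `ε > 0`. -/
def IsApproxSubgradient (φ : H → ℝ) (ε : ℝ) (ξ y : H) : Prop :=
  ∀ᶠ y' in 𝓝 y, ⟪ξ, y' - y⟫ ≤ φ y' - φ y + ε * ‖y' - y‖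

theorem IsApproxSubgradient.mono {φ : H → ℝ} {ε δ : ℝ} {ξ y : H} (hεδ : ε ≤ δ)
    (h : IsApproxSubgradient φ ε ξ y) : IsApproxSubgradient φ δ ξ y :=
  Eventually.mono h fun _ hle => hle.trans (by gcongr)

theorem mem_regNormal_epigraphSet {φ : H → ℝ} {ξ z : H}
    (h : ∀ ε > 0, IsApproxSubgradient φ ε ξ z) :
    pl2 ξ (-1) ∈ regNormal (epigraphSet φ) (pl2 z (φ z)) := by
  refine mem_regNormal_of_forall_eventually_inner_le (le_refl (φ z)) fun ε hε => ?_
  have hfst : Tendsto (fun p : WithLp 2 (H × ℝ) => p.fst) (𝓝 (pl2 z (φ z))) (𝓝 z) :=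
    (WithLp.prodContinuousLinearEquiv 2 ℝ H ℝ).continuous.fst.tendsto _
  refine eventually_nhdsWithin_iff.2 ((hfst.eventually (h ε hε)).mono fun p hp hepi => ?_)
  have hnorm : ‖p.fst - z‖ ≤ ‖p - pl2 z (φ z)‖ := WithLp.norm_fst_le H (p - pl2 z (φ z))
  calc ⟪pl2 ξ (-1), p - pl2 z (φ z)⟫ = ⟪ξ, p.fst - z⟫ - (p.snd - φ z) := by
        simp [pl2, WithLp.prod_inner_apply]
        ring
    _ ≤ ε * ‖p.fst - z‖ := by
        have : φ p.fst ≤ p.snd := hepi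
        linarith
    _ ≤ ε * ‖p - pl2 z (φ z)‖ := by gcongr

theorem frequently_mem_regNormal_epigraphSet [ProperSpace H] {φ : H → ℝ} (hφ : Continuous φ)
    {ε : ℝ} (hε : 0 < ε) {ξ y : H} (h : IsApproxSubgradient φ ε ξ y) :
    ∃ᶠ z in 𝓝 y, ∃ ξ' ∈ closedBall ξ (4 * ε),
      pl2 ξ' (-1) ∈ regNormal (epigraphSet φ) (pl2 z (φ z)) := by
  have hle : ∀ᶠ z in 𝓝 y,
      ε * dist z y ≤ (φ z - ⟪ξ, z⟫) - (φ y - ⟪ξ, y⟫) + 2 * ε * ‖z - y‖ :=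
    Eventually.mono h fun z hz => by
      rw [inner_sub_right] at hz
      rw [dist_eq_norm]
      linarith
  refine (frequently_isLocalMin_add_penalty (h := fun z => φ z - ⟪ξ, z⟫) (b := fun z => ‖z - y‖)
    (by fun_prop) (by fun_prop) (fun _ => norm_nonneg _) (by simp) hε (by positivity) hle).mono ?_
  rintro z ⟨m, hm, hmb, hmin⟩
  refine ⟨ξ - m • (z - y), ?_, mem_regNormal_epigraphSet fun δ hδ => ?_⟩
  · rw [mem_closedBall_iff_norm, sub_sub_cancel_left, norm_neg, norm_smul,
      Real.norm_of_nonneg hm.le]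
    linarith
  · have hfermat := eventually_sub_le_inner_of_isMinFilter (G := id) le_rfl univ_mem
      LipschitzWith.id.lipschitzOnWith hmin hδ
    filter_upwards [hfermat] with z' hz'
    rw [id, id] at hz'
    rw [inner_sub_left]
    linarith [inner_sub_right (𝕜 := ℝ) ξ z' z]

theorem mem_dirLimSubdiff_of_frequently_isApproxSubgradient [ProperSpace H] {φ : H → ℝ}
    (hφ : Continuous φ) {φd : ℝ} {ξ x d : H}
    (hgraph : Tendsto (fun y => (y, φ y)) (dirNhds x d) (dirNhds (x, φ x) (d, φd)))
    (h : ∀ ε > 0, ∃ᶠ y in dirNhds x d, IsApproxSubgradient φ ε ξ y) :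
    ξ ∈ dirLimSubdiff φ x d φd := by
  have hgraph' : Tendsto (fun y => pl2 y (φ y)) (dirNhds x d)
      (dirNhds (pl2 x (φ x)) (pl2 d φd)) :=
    (tendsto_continuousLinearMap_dirNhds
      (WithLp.prodContinuousLinearEquiv 2 ℝ H ℝ).symm.toContinuousLinearMap _ _).comp hgraph
  refine mem_dirLimNormal_iff.2
    ⟨le_refl (φ x), frequently_prod_nhds_of_forall_closedBall fun ε hε => hgraph'.frequently ?_⟩
  refine frequently_dirNhds_of_frequently_nhds ((h (ε / 4) (by positivity)).mono fun y hy => ?_)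
  refine (frequently_mem_regNormal_epigraphSet hφ (by positivity) hy).mono ?_
  rintro z ⟨ξ', hξ', hreg⟩
  refine ⟨pl2 ξ' (-1), ?_, hreg⟩
  rw [mul_div_cancel₀ ε four_ne_zero] at hξ'
  simpa [pl2, WithLp.prod_dist_eq_of_L2] using hξ'

end ApproxSubgradients

section Multipliers

variable {X Y : Type*} [NormedAddCommGroup X] [InnerProductSpace ℝ X]
  [NormedAddCommGroup Y] [InnerProductSpace ℝ Y]
  {F : X → Y} {Γ : Set Y} {K : NNReal} {s : Set X} {x d ξ : X} {v : Y}

/-- Metric subregularity of the constraint `F y ∈ Γ` at `x` in direction `d`: an error bound holds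
in a directional neighborhood of `x`. This is `MSCQdir` with the sets `dirNbhd d ε δ` replaced by
the filter `dirNhds x d`. -/
def MetricSubregularInDir (F : X → Y) (Γ : Set Y) (x d : X) : Prop :=
  ∃ κ ≥ (0 : ℝ), ∀ᶠ y in dirNhds x d, infDist y (F ⁻¹' Γ) ≤ κ * infDist (F y) Γ

theorem eventually_sub_mem_dirNbhd (x d : X) {ε δ : ℝ} (hε : 0 < ε) (hδ : 0 < δ) :
    ∀ᶠ y in dirNhds x d, y - x ∈ dirNbhd d ε δ := by
  have hsub : Tendsto (fun y => ‖y - x‖) (dirNhds x d) (𝓝 0) :=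
    (tendsto_norm_sub_self x).mono_left (dirNhds_le_nhds x d)
  refine (hsub.eventually_le_const hε).and ?_
  rcases eq_or_ne d 0 with rfl | hd
  · simp
  have hcone : ∀ᶠ w in 𝓝 d, ‖‖d‖ • w - ‖w‖ • d‖ < δ * (‖w‖ * ‖d‖) := by
    refine ContinuousAt.eventually_lt (by fun_prop) (by fun_prop) ?_
    rw [sub_self, norm_zero]
    positivity
  rw [dirNhds, eventually_map]
  filter_upwards [tendsto_snd.eventually hcone, tendsto_fst self_mem_nhdsWithin]
    with p hp (ht : 0 < p.1)
  rw [add_sub_cancel_left, norm_smul, Real.norm_of_nonneg ht.le, smul_comm, mul_smul, ← smul_sub,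
    norm_smul, Real.norm_of_nonneg ht.le, mul_assoc, mul_left_comm]
  gcongr

theorem metricSubregularInDir_of_mscqdir {n l : ℕ} {F : Eu n → Eu l} {Γ : Set (Eu l)} {x d : Eu n}
    (h : MSCQdir F Γ x d) : MetricSubregularInDir F Γ x d := by
  obtain ⟨ε, hε, δ, hδ, κ, hκ, hle⟩ := h
  exact ⟨κ, hκ.le, (eventually_sub_mem_dirNbhd x d hε hδ).mono hle⟩

theorem mem_tanCone_preimage_of_metricSubregularInDir [ProperSpace X] (hF : Continuous F)
    (hΓ : IsClosed Γ) (hv : Tendsto (fun t : ℝ => t⁻¹ • (F (x + t • d) - F x)) (𝓝[>] 0) (𝓝 v))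
    (hsub : MetricSubregularInDir F Γ x d) (hd : v ∈ tanCone Γ (F x)) :
    d ∈ tanCone (F ⁻¹' Γ) x := by
  obtain ⟨hx, hfreq⟩ := mem_tanCone_iff.1 hd
  obtain ⟨κ, hκ, hle⟩ := hsub
  obtain ⟨π, hπ, hdist, -⟩ := exists_nearestPoint_tendsto_nhds (hΓ.preimage hF) ⟨x, hx⟩
  let l : Filter (ℝ × Y) := (𝓝[>] 0 ×ˢ 𝓝 v) ⊓ 𝓟 {p | F x + p.1 • p.2 ∈ Γ}
  have : l.NeBot := frequently_mem_iff_neBot.1 (frequently_map.1 hfreq)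
  have hfst : Tendsto Prod.fst l (𝓝[>] 0) := tendsto_fst.mono_left inf_le_left
  have hsnd : Tendsto Prod.snd l (𝓝 v) := tendsto_snd.mono_left inf_le_left
  have hray : Tendsto (fun t : ℝ => x + t • d) (𝓝[>] 0) (dirNhds x d) :=
    tendsto_map.comp (tendsto_id.prodMk tendsto_const_nhds)
  have hbound : ∀ᶠ p in l, ‖p.1⁻¹ • (π (x + p.1 • d) - x) - d‖ ≤
      κ * ‖p.1⁻¹ • (F (x + p.1 • d) - F x) - p.2‖ := by
    filter_upwards [(hray.comp hfst).eventually hle, hfst self_mem_nhdsWithin,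
      mem_inf_of_right (mem_principal_self _)] with p hp (ht : 0 < p.1) hpΓ
    rw [inv_smul_sub_sub ht.ne', inv_smul_sub_sub ht.ne', norm_smul, norm_smul, mul_left_comm]
    gcongr
    calc ‖π (x + p.1 • d) - (x + p.1 • d)‖ = infDist (x + p.1 • d) (F ⁻¹' Γ) := by
          rw [← dist_eq_norm, dist_comm, hdist]
      _ ≤ κ * infDist (F (x + p.1 • d)) Γ := hp
      _ ≤ κ * ‖F (x + p.1 • d) - (F x + p.1 • p.2)‖ := by
          rw [← dist_eq_norm]
          gcongr
          exact infDist_le_dist_of_mem hpΓ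
  have hquot : Tendsto (fun p : ℝ × Y => p.1⁻¹ • (π (x + p.1 • d) - x)) l (𝓝 d) := by
    refine tendsto_iff_norm_sub_tendsto_zero.2
      (squeeze_zero' (.of_forall fun _ => norm_nonneg _) hbound ?_)
    simpa using (((hv.comp hfst).sub hsnd).norm.const_mul κ)
  exact mem_tanCone_iff.2
    ⟨hx, (tendsto_dirNhds hfst hquot).frequently (Eventually.of_forall fun p => hπ _).frequently⟩

theorem frequently_exists_multiplier [ProperSpace X] [ProperSpace Y] (hF : Continuous F)
    (hs : s ∈ 𝓝 x) (hLip : LipschitzOnWith K F s) (hΓ : IsClosed Γ) (hx : F x ∈ Γ) {ε L : ℝ}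
    (hε : 0 < ε) (hL : 0 ≤ L)
    (h : ∀ᶠ y in 𝓝 x, ⟪ξ, y - x⟫ ≤ ε * ‖y - x‖ + L * infDist (F y) Γ) :
    ∃ᶠ z in 𝓝 (x, F x), ∃ lam ∈ regNormal Γ z.2, ‖lam‖ ≤ 2 * L ∧
      IsApproxSubgradient (fun y => ⟪lam, F y⟫) (3 * ε) ξ z.1 := by
  obtain ⟨π, hπ, hdist, hnear⟩ := exists_nearestPoint_tendsto_nhds hΓ ⟨F x, hx⟩
  have hlim : Tendsto (fun y => (y, π (F y))) (𝓝 x) (𝓝 (x, F x)) :=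
    tendsto_id.prodMk_nhds ((hnear _ hx).2.comp hF.continuousAt)
  have hle : ∀ᶠ y in 𝓝 x, ε * dist y x ≤
      (2 * ε * ‖y - x‖ - ⟪ξ, y⟫) - (2 * ε * ‖x - x‖ - ⟪ξ, x⟫) + L * infDist (F y) Γ :=
    h.mono fun y hy => by
      rw [inner_sub_right] at hy
      rw [dist_eq_norm, sub_self, norm_zero]
      linarith
  refine hlim.frequently (((frequently_isLocalMin_add_penalty
    (h := fun y => 2 * ε * ‖y - x‖ - ⟪ξ, y⟫) (b := fun y => infDist (F y) Γ) (by fun_prop)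
    ((continuous_infDist_pt Γ).comp hF) (fun _ => infDist_nonneg) (infDist_zero_of_mem hx)
    hε hL hle).and_eventually (eventually_mem_nhds_iff.2 hs)).mono ?_)
  rintro z ⟨⟨m, hm, hmb, hmin⟩, hsz⟩
  have hz : infDist (F z) Γ = ‖F z - π (F z)‖ := by rw [hdist, dist_eq_norm]
  refine ⟨m • (F z - π (F z)), smul_sub_mem_regNormal_of_infDist_eq_dist (hπ _) (hdist _) hm.le,
    ?_, ?_⟩
  · rwa [norm_smul, Real.norm_of_nonneg hm.le, ← hz]
  have hmin' : IsLocalMin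
      (fun y => (2 * ε * ‖y - x‖ - ⟪ξ, y⟫) + m / 2 * ‖F y - π (F z)‖ ^ 2) z := by
    filter_upwards [hmin] with y hy
    rw [← hz]
    refine hy.trans ?_
    gcongr
    · exact infDist_nonneg
    · exact (infDist_le_dist_of_mem (hπ (F z))).trans_eq (dist_eq_norm _ _)
  filter_upwards [eventually_sub_le_inner_of_isMinFilter le_rfl hsz hLip hmin' hε] with y hy
  rw [inner_sub_right] at hy ⊢
  nlinarith [norm_sub_le_norm_sub_add_norm_sub y z x]

theorem exists_bound_forall_frequently_multiplier [ProperSpace X] [ProperSpace Y]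
    (hF : Continuous F) (hs : s ∈ 𝓝 x) (hLip : LipschitzOnWith K F s) (hΓ : IsClosed Γ)
    (hv : Tendsto (fun t : ℝ => t⁻¹ • (F (x + t • d) - F x)) (𝓝[>] 0) (𝓝 v))
    (hsub : MetricSubregularInDir F Γ x d) (hξ : ξ ∈ dirLimNormal (F ⁻¹' Γ) x d) :
    ∃ B, ∀ ε > 0, ∃ᶠ z in dirNhds (x, F x) (d, v), ∃ lam ∈ regNormal Γ z.2, ‖lam‖ ≤ B ∧
      IsApproxSubgradient (fun y => ⟪lam, F y⟫) ε ξ z.1 := by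
  obtain ⟨κ, hκ, hle⟩ := hsub
  refine ⟨2 * ((‖ξ‖ + 1) * κ), fun ε hε => frequently_dirNhds_of_frequently_nhds
    ((tendsto_graph_dirNhds hs hLip hv).frequently ?_)⟩
  have hnear : ∀ᶠ p in dirNhds x d, s ∈ 𝓝 p :=
    dirNhds_le_nhds x d (eventually_mem_nhds_iff.2 hs)
  have hη : ∀ᶠ η in 𝓝 ξ, ‖ξ - η‖ ≤ ε / 6 ∧ ‖η‖ ≤ ‖ξ‖ + 1 :=
    ((Continuous.tendsto' (by fun_prop) ξ 0 (by simp)).eventually_le_const (by positivity)).and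
      (continuous_norm.continuousAt.eventually_le_const (lt_add_one _))
  refine tendsto_fst.frequently (((mem_dirLimNormal_iff.1 hξ).2.and_eventually
    ((hnear.and (eventually_eventually_nhds_of_dirNhds hle)).prod_mk hη)).mono ?_)
  rintro ⟨p, η⟩ ⟨hreg, ⟨hsp, hle⟩, hclose, hnorm⟩
  refine (frequently_exists_multiplier hF hsp hLip hΓ hreg.1 (ξ := ξ) (ε := ε / 3)
    (L := (‖ξ‖ + 1) * κ) (by positivity) (by positivity) ?_).mono fun z hz => ?_
  · filter_upwards [hle, eventually_inner_le_infDist_of_mem_regNormal (hΓ.preimage hF) hreg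
      (ε := ε / 6) (by positivity)] with y hy hηy
    calc ⟪ξ, y - p⟫ = ⟪η, y - p⟫ + ⟪ξ - η, y - p⟫ := by
          rw [← inner_add_left, add_sub_cancel]
      _ ≤ (ε / 6 * ‖y - p‖ + (‖ξ‖ + 1) * (κ * infDist (F y) Γ)) + ε / 6 * ‖y - p‖ := by
          gcongr
          · refine hηy.trans ?_
            gcongr
            exact infDist_nonneg
          · exact (real_inner_le_norm _ _).trans (by gcongr)
      _ = ε / 3 * ‖y - p‖ + (‖ξ‖ + 1) * κ * infDist (F y) Γ := by ring
  · rwa [mul_div_cancel₀ ε three_ne_zero] at hz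

theorem isApproxSubgradient_inner_of_norm_sub_le {y : X} {lam μ : Y} {ε δ : ℝ} (hs : s ∈ 𝓝 y)
    (hLip : LipschitzOnWith K F s) (hclose : K * ‖lam - μ‖ ≤ δ)
    (h : IsApproxSubgradient (fun y => ⟪lam, F y⟫) ε ξ y) :
    IsApproxSubgradient (fun y => ⟪μ, F y⟫) (ε + δ) ξ y := by
  filter_upwards [h, hs] with y' hy' hs'
  have hdiff : ⟪lam - μ, F y' - F y⟫ ≤ δ * ‖y' - y‖ := calc
    ⟪lam - μ, F y' - F y⟫ ≤ ‖lam - μ‖ * (K * ‖y' - y‖) :=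
      (real_inner_le_norm _ _).trans (by gcongr; exact hLip.norm_sub_le hs' (mem_of_mem_nhds hs))
    _ = K * ‖lam - μ‖ * ‖y' - y‖ := by ring
    _ ≤ δ * ‖y' - y‖ := by gcongr
  rw [inner_sub_left, inner_sub_right, inner_sub_right] at hdiff
  linarith

theorem exists_multiplier_of_forall_frequently [ProperSpace X] [ProperSpace Y] (hF : Continuous F)
    (hs : s ∈ 𝓝 x) (hLip : LipschitzOnWith K F s) (hx : F x ∈ Γ)
    (hv : Tendsto (fun t : ℝ => t⁻¹ • (F (x + t • d) - F x)) (𝓝[>] 0) (𝓝 v)) {B : ℝ}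
    (h : ∀ ε > 0, ∃ᶠ z in dirNhds (x, F x) (d, v), ∃ lam ∈ regNormal Γ z.2, ‖lam‖ ≤ B ∧
      IsApproxSubgradient (fun y => ⟪lam, F y⟫) ε ξ z.1) :
    ∃ lam ∈ dirLimNormal Γ (F x) v, ξ ∈ dirLimSubdiff (fun y => ⟪lam, F y⟫) x d ⟪lam, v⟫ := by
  have hbounded : ∀ ε > 0, ∃ᶠ q in dirNhds (x, F x) (d, v) ×ˢ 𝓟 (closedBall (0 : Y) B),
      q.2 ∈ regNormal Γ q.1.2 ∧ IsApproxSubgradient (fun y => ⟪q.2, F y⟫) ε ξ q.1.1 := by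
    refine fun ε hε hP => h ε hε ((eventually_prod_principal_iff.1 hP).mono ?_)
    rintro z hz ⟨lam, hreg, hnorm, hsub⟩
    exact hz lam (mem_closedBall_zero_iff.2 hnorm) ⟨hreg, hsub⟩
  obtain ⟨μ, -, hμ⟩ := exists_forall_frequently_prod_nhds_of_isCompact
    (isCompact_closedBall (0 : Y) B) (fun _ _ hεδ _ hq => ⟨hq.1, hq.2.mono hεδ⟩)
    hbounded
  have hfst : Tendsto Prod.fst (dirNhds (x, F x) (d, v)) (dirNhds x d) :=
    tendsto_continuousLinearMap_dirNhds (.fst ℝ X Y) _ _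
  have hsnd : Tendsto Prod.snd (dirNhds (x, F x) (d, v)) (dirNhds (F x) v) :=
    tendsto_continuousLinearMap_dirNhds (.snd ℝ X Y) _ _
  have hgraph : Tendsto (fun y => (y, ⟪μ, F y⟫)) (dirNhds x d)
      (dirNhds (x, ⟪μ, F x⟫) (d, ⟪μ, v⟫)) :=
    (tendsto_continuousLinearMap_dirNhds ((ContinuousLinearMap.id ℝ X).prodMap (innerSL ℝ μ))
      _ _).comp (tendsto_graph_dirNhds hs hLip hv)
  refine ⟨μ, mem_dirLimNormal_iff.2 ⟨hx, (hsnd.prodMap tendsto_id).frequently <|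
    (hμ 1 one_pos).mono fun _ => And.left⟩, ?_⟩
  refine mem_dirLimSubdiff_of_frequently_isApproxSubgradient (by fun_prop) hgraph fun ε hε => ?_
  have hclose : ∀ᶠ lam in 𝓝 μ, K * ‖lam - μ‖ ≤ ε / 2 :=
    (Continuous.tendsto' (by fun_prop) μ 0 (by simp)).eventually_le_const (by positivity)
  have hnear : ∀ᶠ z in dirNhds (x, F x) (d, v), s ∈ 𝓝 z.1 :=
    hfst.eventually (dirNhds_le_nhds x d (eventually_mem_nhds_iff.2 hs))
  refine (hfst.comp tendsto_fst).frequently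
    (((hμ (ε / 2) (by positivity)).and_eventually (hnear.prod_mk hclose)).mono ?_)
  rintro ⟨z, lam⟩ ⟨⟨-, hsub⟩, hsz, hlam⟩
  simpa using isApproxSubgradient_inner_of_norm_sub_le hsz hLip hlam hsub

theorem stmt7_general [ProperSpace X] [ProperSpace Y] (hF : Continuous F) (hs : s ∈ 𝓝 x)
    (hLip : LipschitzOnWith K F s)
    (hv : Tendsto (fun t : ℝ => t⁻¹ • (F (x + t • d) - F x)) (𝓝[>] 0) (𝓝 v))
    (hΓ : IsClosed Γ) (hsub : MetricSubregularInDir F Γ x d) :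
    (v ∈ tanCone Γ (F x) → d ∈ tanCone (F ⁻¹' Γ) x) ∧
      dirLimNormal (F ⁻¹' Γ) x d ⊆
        {ξ | ∃ lam ∈ dirLimNormal Γ (F x) v,
          ξ ∈ dirLimSubdiff (fun y => ⟪lam, F y⟫) x d ⟪lam, v⟫} := by
  refine ⟨mem_tanCone_preimage_of_metricSubregularInDir hF hΓ hv hsub, fun ξ hξ => ?_⟩
  obtain ⟨B, hB⟩ := exists_bound_forall_frequently_multiplier hF hs hLip hΓ hv hsub hξ
  exact exists_multiplier_of_forall_frequently hF hs hLip hξ.1 hv hB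

end Multipliers

/-- Under directional MSCQ, directional tangents and an upper estimate for the
directional limiting normal cone to the feasible set. -/
theorem stmt7 {n l : ℕ}
    (F : Eu n → Eu l) (F' : Eu n → Eu n → Eu l)
    (hLip : LocallyLipschitz F) (hF' : IsDirDeriv F F')
    (Γ : Set (Eu l)) (hΓne : Γ.Nonempty) (hΓcl : IsClosed Γ)
    (x : Eu n) (hfeas : F x ∈ Γ)
    (d : Eu n) (hd : d ∈ linCone F F' Γ x) (hMSCQ : MSCQdir F Γ x d) :
    d ∈ tanCone (F ⁻¹' Γ) x ∧
    dirLimNormal (F ⁻¹' Γ) x d ⊆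
      {ξ | ∃ lam ∈ dirLimNormal Γ (F x) (F' x d),
        ξ ∈ scalDirSubdiff F F' lam x d} := by
  obtain ⟨K, s, hs, hK⟩ := hLip x
  exact (stmt7_general hLip.continuous hs hK (hF' x d) hΓcl
    (metricSubregularInDir_of_mscqdir hMSCQ)).imp_left (· hd)

end
end
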